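/- Let d ≥ 1, D := {1,...,d} and let B ⊆ D be nonempty. If f : I^d → ℝ is measurable with ∫_{I^d} |f| log^{|B|}(1+|f|) < ∞, then ‖(L_{n_B}∘R_{n_{B'}})(f) − f‖_{L^1(I^d)} → 0 as min_{j∈D} n_j → ∞. -/

import Mathlib

open MeasureTheory Filter

noncomputable section

/-- The unit cube `[0,1)^d`. -/
def unitCube (d : ℕ) : Set (Fin d → ℝ) := Set.univ.pi fun _ => Set.Ico (0:ℝ) 1

/-- Lebesgue measure restricted to the unit cube `[0,1)^d`. -/
def cubeMeasure (d : ℕ) : Measure (Fin d → ℝ) := volume.restrict (unitCube d)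

/-- The `1`-periodic function equal to `1` on `[0,1/2)` and to `-1` on `[1/2,1)`. -/
def r0 (x : ℝ) : ℝ := if Int.fract x < 1/2 then 1 else -1

/-- The Rademacher functions. -/
def rademacher (n : ℕ) (x : ℝ) : ℝ := r0 (2 ^ n * x)

/-- The Walsh functions (in Paley enumeration, via binary digits). -/
def walsh (n : ℕ) (x : ℝ) : ℝ :=
  ∏ k ∈ Finset.range (n + 1), if n.testBit k then rademacher k x else 1

/-- The Walsh–Dirichlet kernel `D_n`. -/
def dirichletKernel (n : ℕ) (x : ℝ) : ℝ := ∑ k ∈ Finset.range n, walsh k x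

/-- `l_n = ∑_{k=1}^{n-1} 1/k`. -/
def logSum (n : ℕ) : ℝ := ∑ k ∈ Finset.Icc 1 (n - 1), (1 : ℝ) / k

/-- The Nörlund logarithmic kernel `F_n`. -/
def FKernel (n : ℕ) (u : ℝ) : ℝ :=
  (1 / logSum n) * ∑ i ∈ Finset.Ico 1 n, dirichletKernel (n - i) u / i

/-- The Riesz logarithmic kernel `G_n`. -/
def GKernel (n : ℕ) (u : ℝ) : ℝ :=
  (1 / logSum n) * ∑ i ∈ Finset.Ico 1 n, dirichletKernel i u / i

/-- Walsh–Fourier coefficient of `f` on the unit cube. -/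
def walshCoef {d : ℕ} (f : (Fin d → ℝ) → ℝ) (j : Fin d → ℕ) : ℝ :=
  ∫ x, f x * ∏ i, walsh (j i) (x i) ∂(cubeMeasure d)

/-- Rectangular partial sums of the multiple Walsh–Fourier series. -/
def rectPartialSum {d : ℕ} (f : (Fin d → ℝ) → ℝ) (N : Fin d → ℕ) (x : Fin d → ℝ) : ℝ :=
  ∑ j ∈ Fintype.piFinset (fun i => Finset.range (N i)),
    walshCoef f j * ∏ i, walsh (j i) (x i)

/-- The mixed logarithmic means `(L_{n_B} ∘ R_{n_{B'}})(f)`. -/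
def mixedLogMean {d : ℕ} (B : Finset (Fin d)) (f : (Fin d → ℝ) → ℝ)
    (n : Fin d → ℕ) (x : Fin d → ℝ) : ℝ :=
  (∏ j, logSum (n j))⁻¹ *
    ∑ i ∈ Fintype.piFinset (fun j => Finset.Ico 1 (n j)),
      rectPartialSum f (fun j => if j ∈ B then n j - i j else i j) x / ∏ j, (i j : ℝ)

/-- A Young function: convex, continuous, even, vanishing at `0`, with
`Q(u)/u → ∞` at `+∞` and `Q(u)/u → 0` at `0`. -/
structure YoungFunction where
  toFun : ℝ → ℝ
  nonneg : ∀ u, 0 ≤ toFun u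
  convexOn : ConvexOn ℝ Set.univ toFun
  continuous : Continuous toFun
  even : ∀ u, toFun (-u) = toFun u
  map_zero : toFun 0 = 0
  tendsto_atTop : Tendsto (fun u => toFun u / u) atTop atTop
  tendsto_zero : Tendsto (fun u => toFun u / u) (nhdsWithin 0 {(0:ℝ)}ᶜ) (nhds 0)

/-- The set of admissible constants `k` in the Luxemburg norm of `f`. -/
def orliczSet {d : ℕ} (Q : YoungFunction) (f : (Fin d → ℝ) → ℝ) : Set ℝ :=
  {k | 0 < k ∧ Integrable (fun x => Q.toFun (|f x| / k)) (cubeMeasure d) ∧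
    ∫ x, Q.toFun (|f x| / k) ∂(cubeMeasure d) ≤ 1}

/-- `f` belongs to the Orlicz space `L_Q(I^d)`. -/
def MemOrlicz {d : ℕ} (Q : YoungFunction) (f : (Fin d → ℝ) → ℝ) : Prop :=
  Measurable f ∧ (orliczSet Q f).Nonempty

/-- The Luxemburg norm on the Orlicz space `L_Q(I^d)`. -/
def orliczNorm {d : ℕ} (Q : YoungFunction) (f : (Fin d → ℝ) → ℝ) : ℝ :=
  sInf (orliczSet Q f)

/-- `p_n = 2^{2n} + 2^{2n-2} + ⋯ + 2^0`. -/
def pIdx (n : ℕ) : ℕ := ∑ k ∈ Finset.range (n + 1), 4 ^ k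

/-- `m̃ = ⌊ l_{p_{⌊m/2⌋}-1}/16 - 2^15 ⌋`. -/
def mTilde (m : ℕ) : ℤ := ⌊logSum (pIdx (m / 2) - 1) / 16 - 2 ^ 15⌋

/-- `m₀ = min{m : m̃ > 1}`. -/
def m₀ : ℕ := sInf {m : ℕ | 1 < mTilde m}

/-- The set `Ω_n`. -/
def Omega (n : ℕ) : Set ℝ :=
  ⋃ m ∈ Finset.Icc n (2 * n),
    Set.Ico ((2:ℝ) ^ (-(m:ℤ) - 1) + (2:ℝ) ^ (-(m:ℤ) - mTilde m)) ((2:ℝ) ^ (-(m:ℤ)))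

/-- `k`-th binary digit of `x` (the expansion not terminating in `1`'s). -/
def binDigit (k : ℕ) (x : ℝ) : ℕ := (⌊x * 2 ^ (k + 1)⌋).toNat % 2

/-- Dyadic addition on `[0,1)`. -/
def dyadicAdd (x t : ℝ) : ℝ :=
  ∑' k : ℕ, |(binDigit k x : ℝ) - (binDigit k t : ℝ)| / 2 ^ (k + 1)

/-- Dyadic convolution `f ∗ K` on `[0,1)`. -/
def dyadicConv (f K : ℝ → ℝ) (x : ℝ) : ℝ :=
  ∫ t in Set.Ico (0:ℝ) 1, f t * K (dyadicAdd x t)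

/-- Lebesgue measure restricted to `[0,1)`. -/
def unitMeasure : Measure ℝ := volume.restrict (Set.Ico (0:ℝ) 1)

/-- A set `A ⊆ L_Q(I^d)` is nowhere dense w.r.t. the Luxemburg norm. -/
def OrliczNowhereDense {d : ℕ} (Q : YoungFunction) (A : Set ((Fin d → ℝ) → ℝ)) : Prop :=
  ∀ f, MemOrlicz Q f → ∀ ε > 0, ∃ g, MemOrlicz Q g ∧ ∃ δ > 0,
    (∀ h, MemOrlicz Q h → orliczNorm Q (h - g) < δ → orliczNorm Q (h - f) < ε) ∧
    (∀ h, MemOrlicz Q h → orliczNorm Q (h - g) < δ → h ∉ A)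

/-- A set `A ⊆ L_Q(I^d)` is of first Baire category (meager) w.r.t. the Luxemburg norm. -/
def OrliczMeager {d : ℕ} (Q : YoungFunction) (A : Set ((Fin d → ℝ) → ℝ)) : Prop :=
  ∃ F : ℕ → Set ((Fin d → ℝ) → ℝ), (∀ k, OrliczNowhereDense Q (F k)) ∧ A ⊆ ⋃ k, F k

/-!
Only finitely many Walsh functions occur in each mean, so the means act by convolution on the finite
groups `((ℤ/2)^A)^d`. Multiplied by `w_N`, the `N`-th partial sum becomes a martingale transform,
so Burkholder's function bounds it on `L^q` by `O(q)`, uniformly in `N`; this is the cost of each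
variable in `B`. A Riesz mean is an average of Fejér means, whose kernels are bounded in `L^1`, so
each remaining variable costs `O(1)`, and altogether the means have norm `O(q ^ |B|)` on `L^q`.

Writing `T` for a mean, `∫ |T f| = ∫ f · T (sign (T f))` with `‖T (sign (T f))‖_q = O(q ^ |B|)` for
every `q`. Using the exponent `q ≈ k` on the layer `log (1 + |f|) ≈ k`, as in Yano's extrapolation
theorem, bounds `∫ |T f|` uniformly in the order of the mean when `f ∈ L log^{|B|} L`, and makes it
small when `f` is replaced by `f - g` with a suitable dyadic step function `g`. Such a `g` is a
Walsh polynomial, on which the means converge because their multipliers tend to `1`.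
-/

open scoped BigOperators

/-! ### Burkholder's function -/

/-- The remainder of the first-order Taylor expansion of `y ↦ y ^ (m + 1)` at `z`. -/
def powTaylorRemainder (m : ℕ) (y z : ℝ) : ℝ :=
  y ^ (m + 1) - z ^ (m + 1) - (m + 1) * z ^ m * (y - z)

lemma powTaylorRemainder_succ (m : ℕ) (y z : ℝ) :
    powTaylorRemainder (m + 1) y z
      = y * powTaylorRemainder m y z + (m + 1) * z ^ m * (y - z) ^ 2 := by
  simp only [powTaylorRemainder]
  push_cast
  ring

lemma powTaylorRemainder_nonneg (m : ℕ) {y z : ℝ} (hy : 0 ≤ y) (hz : 0 ≤ z) :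
    0 ≤ powTaylorRemainder m y z := by
  induction m with
  | zero => simp [powTaylorRemainder]
  | succ m ih => rw [powTaylorRemainder_succ]; positivity

lemma mul_powTaylorRemainder_le (m : ℕ) {v y z : ℝ} (hv : 0 ≤ v) (hy : v ≤ y) (hz : v ≤ z) :
    (m + 2) * v * powTaylorRemainder m y z ≤ m * powTaylorRemainder (m + 1) y z := by
  have hy0 : 0 ≤ y := hv.trans hy
  have hz0 : 0 ≤ z := hv.trans hz
  induction m with
  | zero => simp [powTaylorRemainder]
  | succ m ih =>
    have hR : 0 ≤ powTaylorRemainder (m + 1) y z := powTaylorRemainder_nonneg _ hy0 hz0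
    have ih_mul := mul_le_mul_of_nonneg_left ih hy0
    have hyv : 0 ≤ (y - v) * powTaylorRemainder (m + 1) y z := mul_nonneg (by linarith) hR
    have hzv : 0 ≤ (m + 1) * (m + 2) * z ^ m * (y - z) ^ 2 * (z - v) :=
      mul_nonneg (by positivity) (by linarith)
    rw [powTaylorRemainder_succ (m + 1)]
    rw [powTaylorRemainder_succ m] at *
    push_cast
    rw [pow_succ z m]
    nlinarith

/-- Burkholder's function for the exponent `n + 2`, in the rotated coordinates in which it is
concave in each variable. -/
def burkholderFun (n : ℕ) (u v : ℝ) : ℝ :=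
  -(n : ℝ) * (max |u| |v|) ^ (n + 2) - (n + 2) * (max |u| |v|) ^ n * (u * v)

namespace burkholderFun

lemma comm (n : ℕ) (u v : ℝ) : burkholderFun n u v = burkholderFun n v u := by
  simp only [burkholderFun, max_comm |u| |v|, mul_comm u v]

lemma neg_neg (n : ℕ) (u v : ℝ) : burkholderFun n (-u) (-v) = burkholderFun n u v := by
  simp [burkholderFun]

lemma zero_left_nonpos (n : ℕ) (v : ℝ) : burkholderFun n 0 v ≤ 0 := by
  simp only [burkholderFun, zero_mul, mul_zero, sub_zero, neg_mul, neg_nonpos]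
  positivity

lemma eq_of_abs_le (n : ℕ) {u v : ℝ} (h : |u| ≤ v) :
    burkholderFun n u v = -(n : ℝ) * v ^ (n + 2) - (n + 2) * v ^ (n + 1) * u := by
  simp only [burkholderFun, abs_of_nonneg ((abs_nonneg u).trans h), max_eq_right h]
  ring

lemma eq_of_le (n : ℕ) {u v : ℝ} (hv : 0 ≤ v) (h : v ≤ u) :
    burkholderFun n u v = -(n : ℝ) * u ^ (n + 2) - (n + 2) * u ^ (n + 1) * v := by
  simp only [burkholderFun, abs_of_nonneg hv, abs_of_nonneg (hv.trans h), max_eq_left h]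
  ring

lemma neg_eq_of_le (n : ℕ) {y v : ℝ} (hv : 0 ≤ v) (h : v ≤ y) :
    burkholderFun n (-y) v = -(n : ℝ) * y ^ (n + 2) + (n + 2) * y ^ (n + 1) * v := by
  simp only [burkholderFun, abs_of_nonneg hv, abs_neg, abs_of_nonneg (hv.trans h), max_eq_left h]
  ring

lemma le_affine (n : ℕ) (u : ℝ) {v : ℝ} (hv : 0 ≤ v) :
    burkholderFun n u v ≤ -(n : ℝ) * v ^ (n + 2) - (n + 2) * v ^ (n + 1) * u := by
  rcases le_total |u| v with h | h
  · rw [eq_of_abs_le n h]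
  rcases le_total 0 u with hu | hu
  · rw [abs_of_nonneg hu] at h
    have hpow : 0 ≤ n * (u ^ (n + 2) - v ^ (n + 2)) :=
      mul_nonneg (by positivity) (sub_nonneg.2 (by gcongr))
    have hmixed : 0 ≤ (n + 2) * u * v * (u ^ n - v ^ n) :=
      mul_nonneg (by positivity) (sub_nonneg.2 (by gcongr))
    rw [eq_of_le n hv h, pow_succ u n, pow_succ v n]
    nlinarith
  · rw [abs_of_nonpos hu] at h
    have hR := mul_powTaylorRemainder_le n hv h le_rfl
    rw [← _root_.neg_neg u, neg_eq_of_le n hv h]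
    simp only [powTaylorRemainder] at hR
    push_cast at hR
    ring_nf at hR ⊢
    linarith

/-- The slope of `w ↦ burkholderFun n w v` at `w = u` in the region `0 ≤ v ≤ u`. -/
def slopeRight (n : ℕ) (u v : ℝ) : ℝ :=
  -(n : ℝ) * (n + 2) * u ^ (n + 1) - (n + 2) * (n + 1) * u ^ n * v

/-- The slope of `w ↦ burkholderFun n (-w) v` at `w = y` in the region `0 ≤ v ≤ y`. -/
def slopeLeft (n : ℕ) (y v : ℝ) : ℝ :=
  -(n : ℝ) * (n + 2) * y ^ (n + 1) + (n + 2) * (n + 1) * y ^ n * v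

lemma slopeRight_le (n : ℕ) {u v : ℝ} (hv : 0 ≤ v) (h : v ≤ u) :
    slopeRight n u v ≤ -(n + 2) * v ^ (n + 1) := by
  have hu : 0 ≤ u := hv.trans h
  have hpow : 0 ≤ (n + 2) * v * (u ^ n - v ^ n) :=
    mul_nonneg (by positivity) (sub_nonneg.2 (by gcongr))
  have hsum : 0 ≤ (n : ℝ) * (n + 2) * u ^ (n + 1) + (n : ℝ) * (n + 2) * u ^ n * v := by positivity
  rw [slopeRight, pow_succ v n]
  linarith

lemma slopeLeft_le (n : ℕ) {y v : ℝ} (hv : 0 ≤ v) (hy : 0 ≤ y) :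
    slopeLeft n y v ≤ (n + 2) * v ^ (n + 1) := by
  have hR : 0 ≤ (n + 2) * powTaylorRemainder n v y :=
    mul_nonneg (by positivity) (powTaylorRemainder_nonneg n hv hy)
  simp only [powTaylorRemainder] at hR
  rw [slopeLeft]
  rw [pow_succ y n] at *
  linarith

lemma le_tangent_of_le (n : ℕ) {u v w : ℝ} (hv : 0 ≤ v) (hu : v ≤ u) (hw : v ≤ w) :
    burkholderFun n w v ≤ burkholderFun n u v + slopeRight n u v * (w - u) := by
  have hw0 : 0 ≤ w := hv.trans hw
  have hu0 : 0 ≤ u := hv.trans hu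
  have hlow : 0 ≤ (n + 2) * v * powTaylorRemainder n w u :=
    mul_nonneg (by positivity) (powTaylorRemainder_nonneg n hw0 hu0)
  have hhigh : 0 ≤ n * powTaylorRemainder (n + 1) w u :=
    mul_nonneg (by positivity) (powTaylorRemainder_nonneg (n + 1) hw0 hu0)
  rw [eq_of_le n hv hu, eq_of_le n hv hw, slopeRight]
  simp only [powTaylorRemainder] at hlow hhigh
  push_cast at hhigh
  linarith

lemma neg_le_tangent_of_le (n : ℕ) {y v w : ℝ} (hv : 0 ≤ v) (hy : v ≤ y) (hw : v ≤ w) :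
    burkholderFun n (-w) v ≤ burkholderFun n (-y) v + slopeLeft n y v * (w - y) := by
  have hR := mul_powTaylorRemainder_le n hv hw hy
  rw [neg_eq_of_le n hv hy, neg_eq_of_le n hv hw, slopeLeft]
  simp only [powTaylorRemainder] at hR
  push_cast at hR
  linarith

lemma le_tangent_right (n : ℕ) {u v : ℝ} (hv : 0 ≤ v) (hu : v ≤ u) (w : ℝ) :
    burkholderFun n w v ≤ burkholderFun n u v + slopeRight n u v * (w - u) := by
  rcases le_total v w with hw | hw
  · exact le_tangent_of_le n hv hu hw
  have h_affine := le_affine n w hv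
  have h_at_v := le_tangent_of_le n hv hu le_rfl
  have h_slope := mul_le_mul_of_nonpos_right (slopeRight_le n hv hu) (sub_nonpos.2 hw)
  rw [eq_of_le n hv le_rfl] at h_at_v
  rw [pow_succ v (n + 1)] at *
  linarith

lemma le_tangent_left (n : ℕ) {y v : ℝ} (hv : 0 ≤ v) (hy : v ≤ y) (w : ℝ) :
    burkholderFun n (-w) v ≤ burkholderFun n (-y) v + slopeLeft n y v * (w - y) := by
  rcases le_total v w with hw | hw
  · exact neg_le_tangent_of_le n hv hy hw
  have h_affine := le_affine n (-w) hv
  have h_at_v := neg_le_tangent_of_le n hv hy le_rfl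
  have h_slope := mul_le_mul_of_nonpos_right (slopeLeft_le n hv (hv.trans hy)) (sub_nonpos.2 hw)
  rw [neg_eq_of_le n hv le_rfl] at h_at_v
  rw [pow_succ v (n + 1)] at *
  linarith

lemma exists_supergradient (n : ℕ) (u : ℝ) {v : ℝ} (hv : 0 ≤ v) :
    ∃ s : ℝ, ∀ w, burkholderFun n w v ≤ burkholderFun n u v + s * (w - u) := by
  rcases le_total |u| v with h | h
  · refine ⟨-(n + 2) * v ^ (n + 1), fun w => ?_⟩
    rw [eq_of_abs_le n h]
    linarith [le_affine n w hv]
  rcases le_total 0 u with hu | hu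
  · rw [abs_of_nonneg hu] at h
    exact ⟨slopeRight n u v, le_tangent_right n hv h⟩
  · rw [abs_of_nonpos hu] at h
    refine ⟨-slopeLeft n (-u) v, fun w => ?_⟩
    have := le_tangent_left n hv h (-w)
    rw [_root_.neg_neg, _root_.neg_neg] at this
    linarith

lemma midpoint_left (n : ℕ) (u h v : ℝ) :
    burkholderFun n (u + h) v + burkholderFun n (u - h) v ≤ 2 * burkholderFun n u v := by
  wlog hv : 0 ≤ v generalizing u h v
  · have := this (-u) (-h) (-v) (neg_nonneg.2 (le_of_not_ge hv))
    rwa [← neg_add, ← neg_sub', neg_neg, neg_neg, neg_neg] at this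
  obtain ⟨s, hs⟩ := exists_supergradient n u hv
  linarith [hs (u + h), hs (u - h)]

lemma eq_pow_mul (n : ℕ) (u v : ℝ) : burkholderFun n u v
    = (max |u| |v|) ^ n * (-(n : ℝ) * (max |u| |v|) ^ 2 - (n + 2) * (u * v)) := by
  rw [burkholderFun]
  ring

lemma neg_mul_max_pow_le (n : ℕ) (u v : ℝ) :
    -(2 * (n + 2)) * (max |u| |v|) ^ (n + 2) ≤ burkholderFun n u v := by
  set M := max |u| |v|
  have huv : u * v ≤ M * M := (le_abs_self _).trans (by
    rw [abs_mul]
    gcongr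
    exacts [le_max_left _ _, le_max_right _ _])
  have h_bracket : -(2 * (n + 2)) * M ^ 2 ≤ -(n : ℝ) * M ^ 2 - (n + 2) * (u * v) := by
    nlinarith [sq_nonneg M, Nat.cast_nonneg (α := ℝ) n]
  calc -(2 * (n + 2)) * M ^ (n + 2) = M ^ n * (-(2 * (n + 2)) * M ^ 2) := by ring
    _ ≤ burkholderFun n u v := by rw [eq_pow_mul]; gcongr

lemma max_abs_le_abs_add_abs (u v : ℝ) : max |u| |v| ≤ |u + v| + |u| := by
  refine max_le (le_add_of_nonneg_left (abs_nonneg _)) ?_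
  simpa using abs_sub (u + v) u

lemma abs_pow_le_of_le {n : ℕ} {u v : ℝ} (h : |u| ≤ 4 * (n + 2) * |u + v|) :
    |u| ^ (n + 2) ≤ burkholderFun n u v + (20 * (n + 2) * |u + v|) ^ (n + 2) := by
  set M := max |u| |v|
  have hw : 0 ≤ |u + v| := abs_nonneg _
  have hMle : M ≤ 5 * (n + 2) * |u + v| := by
    have : |u + v| ≤ (n + 2) * |u + v| :=
      le_mul_of_one_le_left hw (by linarith [n.cast_nonneg (α := ℝ)])
    linarith [max_abs_le_abs_add_abs u v]
  have hpow : M ^ (n + 2) ≤ (5 * (n + 2) * |u + v|) ^ (n + 2) := by gcongr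
  have hu : |u| ^ (n + 2) ≤ M ^ (n + 2) := by gcongr; exact le_max_left _ _
  have h_bernoulli : 1 + 2 * ((n : ℝ) + 2) ≤ 4 ^ (n + 2) := by
    have := one_add_mul_le_pow (show (-2 : ℝ) ≤ 3 by norm_num) (n + 2)
    norm_num at this
    linarith
  have h_split : (20 * (n + 2) * |u + v|) ^ (n + 2)
      = 4 ^ (n + 2) * (5 * ((n : ℝ) + 2) * |u + v|) ^ (n + 2) := by
    rw [← mul_pow]
    ring
  have h_four := mul_le_mul h_bernoulli hpow (by positivity) (by positivity)
  linarith [neg_mul_max_pow_le n u v]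

lemma abs_pow_le_of_ge {n : ℕ} {u v : ℝ} (h : 4 * (n + 2) * |u + v| ≤ |u|) :
    |u| ^ (n + 2) ≤ burkholderFun n u v := by
  set M := max |u| |v|
  set w := |u + v| with hw
  have hu : 0 ≤ |u| := abs_nonneg u
  have hw0 : 0 ≤ w := abs_nonneg _
  have huv : u * v ≤ |u| * w - |u| ^ 2 := by
    have : u * (u + v) ≤ |u| * w := by rw [hw, ← abs_mul]; exact le_abs_self _
    rw [sq_abs]
    linarith
  have h_bracket : |u| ^ 2 ≤ -(n : ℝ) * M ^ 2 - (n + 2) * (u * v) := by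
    have hM2 : (n : ℝ) * M ^ 2 ≤ n * (w + |u|) ^ 2 := by
      gcongr
      exact max_abs_le_abs_add_abs u v
    have hprod : (n + 2) * (u * v) ≤ (n + 2) * (|u| * w - |u| ^ 2) := by gcongr
    have hqw : (n + 2) * w ≤ |u| / 4 := by linarith
    have hw8 : w ≤ |u| / 8 := by nlinarith
    have hqwu : (n + 2) * w * |u| ≤ |u| / 4 * |u| := by gcongr
    have hqww : (n + 2) * w * w ≤ |u| / 4 * (|u| / 8) := by gcongr
    nlinarith [mul_nonneg hw0 hu, sq_nonneg w]
  calc |u| ^ (n + 2) = |u| ^ n * |u| ^ 2 := by ring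
    _ ≤ M ^ n * (-(n : ℝ) * M ^ 2 - (n + 2) * (u * v)) := by
      gcongr
      exact le_max_left _ _
    _ = burkholderFun n u v := (eq_pow_mul n u v).symm

lemma abs_pow_le (n : ℕ) (u v : ℝ) :
    |u| ^ (n + 2) ≤ burkholderFun n u v + (20 * (n + 2) * |u + v|) ^ (n + 2) := by
  rcases le_total |u| (4 * (n + 2) * |u + v|) with h | h
  · exact abs_pow_le_of_le h
  · exact (abs_pow_le_of_ge h).trans (le_add_of_nonneg_right (by positivity))

end burkholderFun

/-! ### Averaging operators on finite sets -/

lemma expect_fin_succ {α : Type*} [Fintype α] {A : ℕ} (F : (Fin (A + 1) → α) → ℝ) :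
    𝔼 x, F x = 𝔼 e : α, 𝔼 x : Fin A → α, F (Fin.cons e x) := by
  rw [← Finset.expect_product', Finset.univ_product_univ]
  exact (Fintype.expect_equiv (Fin.consEquiv fun _ => α) _ _ fun _ => rfl).symm

lemma expect_bool (F : Bool → ℝ) : 𝔼 e, F e = (F true + F false) / 2 := by
  rw [Fintype.expect_eq_sum_div_card, Fintype.sum_bool, Fintype.card_bool, Nat.cast_ofNat]

lemma abs_sum_mul_pow_le {ι : Type*} (s : Finset ι) (w a : ι → ℝ) (p : ℕ) :
    |∑ i ∈ s, w i * a i| ^ (p + 1)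
      ≤ (∑ i ∈ s, |w i|) ^ p * ∑ i ∈ s, |w i| * |a i| ^ (p + 1) := by
  set W := ∑ i ∈ s, |w i| with hW
  have h_abs : |∑ i ∈ s, w i * a i| ≤ ∑ i ∈ s, |w i| * |a i| := by
    simpa only [abs_mul] using Finset.abs_sum_le_sum_abs (fun i => w i * a i) s
  rcases (Finset.sum_nonneg fun i _ => abs_nonneg (w i)).eq_or_lt with h0 | hpos
  · have hw : ∀ i ∈ s, w i = 0 := fun i hi =>
      abs_eq_zero.1 ((Finset.sum_eq_zero_iff_of_nonneg fun i _ => abs_nonneg (w i)).1 h0.symm i hi)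
    rw [Finset.sum_eq_zero fun i hi => by rw [hw i hi, zero_mul], abs_zero, zero_pow p.succ_ne_zero]
    positivity
  · have hjensen := Real.pow_arith_mean_le_arith_mean_pow s (fun i => |w i| / W) (fun i => |a i|)
      (fun i _ => by positivity) (by rw [← Finset.sum_div, ← hW, div_self hpos.ne'])
      (fun i _ => abs_nonneg _) (p + 1)
    simp only [div_mul_eq_mul_div, ← Finset.sum_div, div_pow] at hjensen
    rw [div_le_div_iff₀ (by positivity) hpos, pow_succ W p, ← mul_assoc] at hjensen
    calc |∑ i ∈ s, w i * a i| ^ (p + 1) ≤ (∑ i ∈ s, |w i| * |a i|) ^ (p + 1) := by gcongr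
      _ ≤ (∑ i ∈ s, |w i| * |a i| ^ (p + 1)) * W ^ p := le_of_mul_le_mul_right hjensen hpos
      _ = W ^ p * ∑ i ∈ s, |w i| * |a i| ^ (p + 1) := mul_comm _ _

/-- `T` has norm at most `C` on `L^q` of the uniform probability measure on the finite set `Q`. -/
def LpBoundedBy {Q : Type*} [Fintype Q] (q : ℕ) (C : ℝ) (T : (Q → ℝ) → Q → ℝ) : Prop :=
  ∀ g, 𝔼 x, |T g x| ^ q ≤ C ^ q * 𝔼 x, |g x| ^ q

namespace LpBoundedBy

variable {Q : Type*} [Fintype Q] {C : ℝ}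

lemma mono {q : ℕ} {T : (Q → ℝ) → Q → ℝ} {C' : ℝ} (h : LpBoundedBy q C T) (hC : 0 ≤ C)
    (hCC' : C ≤ C') : LpBoundedBy q C' T := fun g =>
  (h g).trans (mul_le_mul_of_nonneg_right (pow_le_pow_left₀ hC hCC' q)
    (Finset.expect_nonneg fun _ _ => by positivity))

lemma linearCombination {p : ℕ} {ι : Type*} {s : Finset ι} (w : ι → ℝ)
    {T : ι → (Q → ℝ) → Q → ℝ} (h : ∀ i ∈ s, LpBoundedBy (p + 1) C (T i)) :
    LpBoundedBy (p + 1) ((∑ i ∈ s, |w i|) * C) (fun g x => ∑ i ∈ s, w i * T i g x) := fun g =>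
  calc 𝔼 x, |∑ i ∈ s, w i * T i g x| ^ (p + 1)
      ≤ 𝔼 x, (∑ i ∈ s, |w i|) ^ p * ∑ i ∈ s, |w i| * |T i g x| ^ (p + 1) :=
        Finset.expect_le_expect fun x _ => abs_sum_mul_pow_le s w (fun i => T i g x) p
    _ = (∑ i ∈ s, |w i|) ^ p * ∑ i ∈ s, |w i| * 𝔼 x, |T i g x| ^ (p + 1) := by
        simp only [← Finset.mul_expect, Finset.expect_sum_comm]
    _ ≤ (∑ i ∈ s, |w i|) ^ p * ∑ i ∈ s, |w i| * (C ^ (p + 1) * 𝔼 x, |g x| ^ (p + 1)) := by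
        gcongr with i hi
        exact h i hi g
    _ = ((∑ i ∈ s, |w i|) * C) ^ (p + 1) * 𝔼 x, |g x| ^ (p + 1) := by
        rw [← Finset.sum_mul]
        ring

end LpBoundedBy

/-- Convolution on a finite group with respect to the uniform probability measure. -/
def convOp {G : Type*} [Fintype G] [AddCommGroup G] (k g : G → ℝ) (x : G) : ℝ :=
  𝔼 t, k (x - t) * g t

namespace LpBoundedBy

variable {G : Type*} [Fintype G] [AddCommGroup G]

lemma translation (q : ℕ) (s : G) : LpBoundedBy q 1 (fun g x => g (x - s)) := fun g => by
  rw [one_pow, one_mul]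
  exact (Fintype.expect_equiv (Equiv.subRight s) _ (fun x => |g x| ^ q) fun _ => rfl).le

lemma convOp_of_expect_abs_le (p : ℕ) {k : G → ℝ} {C : ℝ} (hk : 𝔼 z, |k z| ≤ C) :
    LpBoundedBy (p + 1) C (convOp k) := by
  have h_norm : (∑ z, |k z / Fintype.card G|) * 1 = 𝔼 z, |k z| := by
    simp only [mul_one, abs_div, Nat.abs_cast, ← Finset.sum_div, Fintype.expect_eq_sum_div_card]
  have h_eq : convOp k = fun g x => ∑ z, k z / Fintype.card G * g (x - z) := by
    funext g x
    rw [convOp, Fintype.expect_equiv (Equiv.subLeft x) _ (fun z => k z * g (x - z))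
      fun t => by simp, Fintype.expect_eq_sum_div_card, Finset.sum_div]
    exact Finset.sum_congr rfl fun z _ => by ring
  have h_comb := linearCombination (fun z => k z / Fintype.card G)
    fun z (_ : z ∈ Finset.univ) => translation (p + 1) z
  rw [h_norm, ← h_eq] at h_comb
  exact h_comb.mono (Finset.expect_nonneg fun _ _ => abs_nonneg _) hk

lemma convOp_pi (q : ℕ) {d : ℕ} (k : Fin d → G → ℝ) (C : Fin d → ℝ) (hC : ∀ j, 0 ≤ C j)
    (h : ∀ j, LpBoundedBy q (C j) (convOp (k j))) :
    LpBoundedBy q (∏ j, C j) (convOp fun z : Fin d → G => ∏ j, k j (z j)) := by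
  induction d with
  | zero => intro g; simp [convOp, Subsingleton.elim default (0 : Fin 0 → G)]
  | succ d ih =>
    intro g
    have hC0 := hC 0
    set tailConv : G → (Fin d → G) → ℝ := fun t₀ =>
      convOp (fun z => ∏ j, k j.succ (z j)) fun t => g (Fin.cons t₀ t) with h_tailConv
    have h_tail (t₀ : G) := ih (fun j => k j.succ) (fun j => C j.succ) (fun j => hC _)
      (fun j => h _) fun t => g (Fin.cons t₀ t)
    have h_split (x₀ : G) (x : Fin d → G) :
        convOp (fun z : Fin (d + 1) → G => ∏ j, k j (z j)) g (Fin.cons x₀ x)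
          = convOp (k 0) (fun t₀ => tailConv t₀ x) x₀ := by
      simp only [h_tailConv, convOp, expect_fin_succ, Finset.mul_expect, Fin.prod_univ_succ,
        Pi.sub_apply, Fin.cons_zero, Fin.cons_succ, mul_assoc]
    calc 𝔼 x, |convOp (fun z : Fin (d + 1) → G => ∏ j, k j (z j)) g x| ^ q
        = 𝔼 x, 𝔼 x₀, |convOp (k 0) (fun t₀ => tailConv t₀ x) x₀| ^ q := by
          rw [expect_fin_succ, Finset.expect_comm]
          simp only [h_split]
      _ ≤ 𝔼 x, C 0 ^ q * 𝔼 t₀, |tailConv t₀ x| ^ q :=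
          Finset.expect_le_expect fun x _ => h 0 fun t₀ => tailConv t₀ x
      _ = C 0 ^ q * 𝔼 t₀, 𝔼 x, |tailConv t₀ x| ^ q := by
          rw [← Finset.mul_expect, Finset.expect_comm]
      _ ≤ C 0 ^ q * 𝔼 t₀, (∏ j : Fin d, C j.succ) ^ q * 𝔼 t, |g (Fin.cons t₀ t)| ^ q :=
          mul_le_mul_of_nonneg_left (Finset.expect_le_expect fun t₀ _ => h_tail t₀)
            (pow_nonneg hC0 q)
      _ = (∏ j, C j) ^ q * 𝔼 x, |g x| ^ q := by
          rw [expect_fin_succ, ← Finset.mul_expect, Fin.prod_univ_succ, mul_pow, mul_assoc]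

end LpBoundedBy

/-! ### Walsh functions on the finite dyadic group -/

/-- The character of `ℤ/2` as a sign; addition of booleans is exclusive or. -/
def boolSign (b : Bool) : ℝ := if b then -1 else 1

lemma boolSign_mul_self (b : Bool) : boolSign b * boolSign b = 1 := by
  cases b <;> simp [boolSign]

lemma boolSign_sub (b c : Bool) : boolSign (b - c) = boolSign b * boolSign c := by
  change boolSign (xor b c) = _
  cases b <;> cases c <;> simp [boolSign]

/-- The `k`-th Walsh function on `(ℤ/2)^A`, where the binary digits of `k` select the
coordinates. For `k < 2 ^ A` these are the characters of the group. -/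
def dyadicWalsh {A : ℕ} (k : ℕ) (x : Fin A → Bool) : ℝ :=
  ∏ j : Fin A, if k.testBit j then boolSign (x j) else 1

namespace dyadicWalsh

variable {A : ℕ}

lemma sub_eq_mul (k : ℕ) (x t : Fin A → Bool) :
    dyadicWalsh k (x - t) = dyadicWalsh k x * dyadicWalsh k t := by
  simp only [dyadicWalsh, ← Finset.prod_mul_distrib, Pi.sub_apply, boolSign_sub]
  refine Finset.prod_congr rfl fun j _ => ?_
  split_ifs <;> simp

lemma xor_eq_mul (k l : ℕ) (x : Fin A → Bool) :
    dyadicWalsh (k ^^^ l) x = dyadicWalsh k x * dyadicWalsh l x := by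
  simp only [dyadicWalsh, ← Finset.prod_mul_distrib, Nat.testBit_xor]
  refine Finset.prod_congr rfl fun j _ => ?_
  cases k.testBit j <;> cases l.testBit j <;> simp [boolSign_mul_self]

lemma zero_eq_one (x : Fin A → Bool) : dyadicWalsh 0 x = 1 := by simp [dyadicWalsh]

lemma mul_self (k : ℕ) (x : Fin A → Bool) : dyadicWalsh k x * dyadicWalsh k x = 1 := by
  rw [← xor_eq_mul, Nat.xor_self, zero_eq_one]

lemma abs_eq_one (k : ℕ) (x : Fin A → Bool) : |dyadicWalsh k x| = 1 :=
  abs_eq_abs.2 (mul_self_eq_one_iff.1 (mul_self k x)) |>.trans abs_one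

lemma neg_one_le (k : ℕ) (x : Fin A → Bool) : -1 ≤ dyadicWalsh k x :=
  (abs_le.1 (abs_eq_one k x).le).1

lemma two_mul_cons (l : ℕ) (e : Bool) (x : Fin A → Bool) :
    dyadicWalsh (2 * l) (Fin.cons e x : Fin (A + 1) → Bool) = dyadicWalsh l x := by
  simp [dyadicWalsh, Fin.prod_univ_succ, Nat.testBit_succ]

lemma two_mul_add_one_cons (l : ℕ) (e : Bool) (x : Fin A → Bool) :
    dyadicWalsh (2 * l + 1) (Fin.cons e x : Fin (A + 1) → Bool)
      = boolSign e * dyadicWalsh l x := by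
  simp [dyadicWalsh, Fin.prod_univ_succ, Nat.testBit_succ, show (2 * l + 1) / 2 = l by omega]

end dyadicWalsh

/-! ### Partial sums: the martingale-transform bound -/

lemma sum_range_two_mul (f : ℕ → ℝ) (M : ℕ) :
    ∑ k ∈ Finset.range (2 * M), f k = ∑ l ∈ Finset.range M, (f (2 * l) + f (2 * l + 1)) := by
  induction M with
  | zero => simp
  | succ M ih =>
    rw [Finset.sum_range_succ, ← ih, show 2 * (M + 1) = 2 * M + 1 + 1 by ring,
      Finset.sum_range_succ, Finset.sum_range_succ, add_assoc]

/-- The Walsh–Dirichlet kernel on `(ℤ/2)^A`. -/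
def dyadicDirichlet {A : ℕ} (N : ℕ) (z : Fin A → Bool) : ℝ :=
  ∑ k ∈ Finset.range N, dyadicWalsh k z

lemma dyadicDirichlet.two_mul_cons {A : ℕ} (M : ℕ) (e : Bool) (z : Fin A → Bool) :
    dyadicDirichlet (2 * M) (Fin.cons e z : Fin (A + 1) → Bool)
      = (1 + boolSign e) * dyadicDirichlet M z := by
  simp only [dyadicDirichlet, sum_range_two_mul, dyadicWalsh.two_mul_cons,
    dyadicWalsh.two_mul_add_one_cons, Finset.mul_sum]
  exact Finset.sum_congr rfl fun l _ => by ring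

/-- The Dirichlet kernel multiplied by `w_N`. Convolution with it is a martingale transform whose
multipliers are the binary digits of `N`. -/
def modulatedDirichlet {A : ℕ} (N : ℕ) (z : Fin A → Bool) : ℝ :=
  dyadicWalsh N z * dyadicDirichlet N z

namespace modulatedDirichlet

variable {A : ℕ}

lemma two_mul_cons (M : ℕ) (e : Bool) (z : Fin A → Bool) :
    modulatedDirichlet (2 * M) (Fin.cons e z : Fin (A + 1) → Bool)
      = (1 + boolSign e) * modulatedDirichlet M z := by
  rw [modulatedDirichlet, modulatedDirichlet, dyadicDirichlet.two_mul_cons,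
    dyadicWalsh.two_mul_cons]
  ring

lemma two_mul_add_one_cons (M : ℕ) (e : Bool) (z : Fin A → Bool) :
    modulatedDirichlet (2 * M + 1) (Fin.cons e z : Fin (A + 1) → Bool)
      = (1 + boolSign e) * modulatedDirichlet M z + boolSign e := by
  have h_sum : dyadicDirichlet (2 * M + 1) (Fin.cons e z : Fin (A + 1) → Bool)
      = (1 + boolSign e) * dyadicDirichlet M z + dyadicWalsh M z := by
    rw [← dyadicDirichlet.two_mul_cons, ← dyadicWalsh.two_mul_cons M e]
    exact Finset.sum_range_succ _ _
  rw [modulatedDirichlet, modulatedDirichlet, h_sum, dyadicWalsh.two_mul_add_one_cons]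
  linear_combination boolSign e * dyadicWalsh.mul_self M z
    + dyadicWalsh M z * dyadicDirichlet M z * boolSign_mul_self e

end modulatedDirichlet

lemma convOp_cons {A : ℕ} {k : (Fin (A + 1) → Bool) → ℝ} {k' : (Fin A → Bool) → ℝ} {c : ℝ}
    (hk : ∀ e z, k (Fin.cons e z) = (1 + boolSign e) * k' z + c * boolSign e)
    (g : (Fin (A + 1) → Bool) → ℝ) (e : Bool) (x : Fin A → Bool) :
    convOp k g (Fin.cons e x)
      = convOp k' (fun t => g (Fin.cons e t)) x + c * (𝔼 t, g (Fin.cons e t) - 𝔼 t, g t) := by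
  have h_cons (f : Bool) (t : Fin A → Bool) :
      (Fin.cons e x : Fin (A + 1) → Bool) - Fin.cons f t = Fin.cons (e - f) (x - t) := by
    funext j
    cases j using Fin.cases <;> simp
  have h_inner (f : Bool) : 𝔼 t, k (Fin.cons e x - Fin.cons f t) * g (Fin.cons f t)
      = (1 + boolSign e * boolSign f) * convOp k' (fun t => g (Fin.cons f t)) x
        + c * (boolSign e * boolSign f) * 𝔼 t, g (Fin.cons f t) := by
    simp only [h_cons, hk, boolSign_sub, convOp, Finset.mul_expect, ← Finset.expect_add_distrib]
    exact Finset.expect_congr rfl fun t _ => by ring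
  rw [convOp, expect_fin_succ, expect_fin_succ g]
  simp only [h_inner, expect_bool]
  cases e <;> simp only [boolSign, if_true, Bool.false_eq_true, if_false] <;> ring

lemma expect_cons_sub_expect {A : ℕ} (g : (Fin (A + 1) → Bool) → ℝ) (e : Bool) :
    𝔼 t, g (Fin.cons e t) - 𝔼 t, g t
      = boolSign e * ((𝔼 t, g (Fin.cons false t) - 𝔼 t, g (Fin.cons true t)) / 2) := by
  rw [expect_fin_succ g, expect_bool]
  cases e <;> simp only [boolSign, if_true, Bool.false_eq_true, if_false] <;> ring

namespace burkholderFun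

lemma expect_add_boolSign_left_le (n : ℕ) (u h v : ℝ) :
    𝔼 e, burkholderFun n (u + boolSign e * h) v ≤ burkholderFun n u v := by
  simp only [expect_bool, boolSign, if_true, Bool.false_eq_true, if_false, neg_mul, one_mul,
    ← sub_eq_add_neg]
  linarith [midpoint_left n u h v]

lemma expect_add_boolSign_right_le (n : ℕ) (u h v : ℝ) :
    𝔼 e, burkholderFun n u (v + boolSign e * h) ≤ burkholderFun n u v := by
  simpa only [comm n u] using expect_add_boolSign_left_le n v h u

end burkholderFun

-- Averaging over one coordinate at a time moves `burkholderFun` along one of its two concave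
-- directions: the first if the corresponding binary digit of `N` is `1`, the second otherwise.
lemma expect_burkholderFun_convOp_le (n : ℕ) {A N : ℕ} (hN : N < 2 ^ A) (g : (Fin A → Bool) → ℝ)
    (a b : ℝ) :
    𝔼 x, burkholderFun n (a + convOp (modulatedDirichlet N) g x)
        (b + (g x - 𝔼 t, g t - convOp (modulatedDirichlet N) g x)) ≤ burkholderFun n a b := by
  induction A generalizing N a b with
  | zero =>
    obtain rfl : N = 0 := by simpa using hN
    simp [convOp, modulatedDirichlet, dyadicDirichlet, Subsingleton.elim default ![]]
  | succ A ih =>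
    set h := (𝔼 t, g (Fin.cons false t) - 𝔼 t, g (Fin.cons true t)) / 2
    have h_mean (e : Bool) : 𝔼 t, g (Fin.cons e t) = 𝔼 t, g t + boolSign e * h :=
      sub_eq_iff_eq_add'.1 (expect_cons_sub_expect g e)
    rw [expect_fin_succ]
    obtain ⟨M, rfl | rfl⟩ := N.even_or_odd'
    · refine (Finset.expect_le_expect fun e _ => ?_).trans
        (burkholderFun.expect_add_boolSign_right_le n a h b)
      refine (Finset.expect_congr rfl fun x _ => ?_).le.trans
        (ih (N := M) (by omega) (fun t => g (Fin.cons e t)) a (b + boolSign e * h))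
      rw [convOp_cons (c := 0) fun e z => by rw [modulatedDirichlet.two_mul_cons]; ring, h_mean]
      ring_nf
    · refine (Finset.expect_le_expect fun e _ => ?_).trans
        (burkholderFun.expect_add_boolSign_left_le n a h b)
      refine (Finset.expect_congr rfl fun x _ => ?_).le.trans
        (ih (N := M) (by omega) (fun t => g (Fin.cons e t)) (a + boolSign e * h) b)
      rw [convOp_cons (c := 1) fun e z => by rw [modulatedDirichlet.two_mul_add_one_cons, one_mul],
        h_mean]
      ring_nf

namespace LpBoundedBy

lemma convOp_modulatedDirichlet (n : ℕ) {A N : ℕ} (hN : N < 2 ^ A) :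
    LpBoundedBy (n + 2) (20 * (n + 2)) (convOp (modulatedDirichlet (A := A) N)) := fun g => by
  set T := convOp (modulatedDirichlet N) g
  have h_bellman : 𝔼 x, burkholderFun n (T x) (g x - T x) ≤ 0 := by
    refine le_trans ?_ ((expect_burkholderFun_convOp_le n hN g 0 (𝔼 t, g t)).trans
      (burkholderFun.zero_left_nonpos n _))
    exact (Finset.expect_congr rfl fun x _ => by congr 1 <;> ring).le
  calc 𝔼 x, |T x| ^ (n + 2)
      ≤ 𝔼 x, (burkholderFun n (T x) (g x - T x) + (20 * (n + 2) * |g x|) ^ (n + 2)) :=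
        Finset.expect_le_expect fun x _ => by
          simpa only [add_sub_cancel] using burkholderFun.abs_pow_le n (T x) (g x - T x)
    _ ≤ (20 * (n + 2)) ^ (n + 2) * 𝔼 x, |g x| ^ (n + 2) := by
        simp only [Finset.expect_add_distrib, mul_pow _ |_|, ← Finset.mul_expect]
        linarith

lemma convOp_dirichlet (n : ℕ) {A N : ℕ} (hN : N < 2 ^ A) :
    LpBoundedBy (n + 2) (20 * (n + 2)) (convOp (dyadicDirichlet (A := A) N)) := fun g => by
  have h_mod (x : Fin A → Bool) :
      convOp (modulatedDirichlet N) (fun t => dyadicWalsh N t * g t) x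
        = dyadicWalsh N x * convOp (dyadicDirichlet N) g x := by
    simp only [convOp, Finset.mul_expect, modulatedDirichlet, dyadicWalsh.sub_eq_mul]
    refine Finset.expect_congr rfl fun t _ => ?_
    linear_combination dyadicWalsh N x * dyadicDirichlet N (x - t) * g t * dyadicWalsh.mul_self N t
  simpa only [h_mod, abs_mul, dyadicWalsh.abs_eq_one, one_mul] using
    convOp_modulatedDirichlet n hN fun t => dyadicWalsh N t * g t

end LpBoundedBy

/-! ### Fejér sums and logarithmic kernels -/

lemma expect_dyadicWalsh {A k : ℕ} (hk : k < 2 ^ A) :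
    𝔼 x : Fin A → Bool, dyadicWalsh k x = if k = 0 then 1 else 0 := by
  induction A generalizing k with
  | zero =>
    obtain rfl : k = 0 := by simpa using hk
    simp [dyadicWalsh.zero_eq_one]
  | succ A ih =>
    rw [expect_fin_succ]
    obtain ⟨l, rfl | rfl⟩ := k.even_or_odd'
    · simp only [dyadicWalsh.two_mul_cons, ih (k := l) (by omega), Fintype.expect_const]
      simp
    · simp only [dyadicWalsh.two_mul_add_one_cons, ← Finset.mul_expect, expect_bool]
      simp [boolSign]

lemma two_pow_add_eq_xor {b k : ℕ} (hk : k < 2 ^ b) : 2 ^ b + k = 2 ^ b ^^^ k := by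
  have h_or := Nat.two_pow_add_eq_or_of_lt hk 1
  rw [mul_one] at h_or
  rw [h_or]
  refine Nat.eq_of_testBit_eq fun j => ?_
  rw [Nat.testBit_or, Nat.testBit_xor, Nat.testBit_two_pow]
  rcases eq_or_ne b j with rfl | hj
  · simp [Nat.testBit_lt_two_pow hk]
  · simp [hj]

namespace dyadicDirichlet

variable {A : ℕ}

lemma two_pow_add {b i : ℕ} (hi : i ≤ 2 ^ b) (z : Fin A → Bool) :
    dyadicDirichlet (2 ^ b + i) z
      = dyadicDirichlet (2 ^ b) z + dyadicWalsh (2 ^ b) z * dyadicDirichlet i z := by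
  simp only [dyadicDirichlet, Finset.sum_range_add, Finset.mul_sum]
  congr 1
  refine Finset.sum_congr rfl fun k hk => ?_
  rw [two_pow_add_eq_xor ((Finset.mem_range.1 hk).trans_le hi), dyadicWalsh.xor_eq_mul]

lemma two_pow_nonneg (b : ℕ) (z : Fin A → Bool) : 0 ≤ dyadicDirichlet (2 ^ b) z := by
  induction b with
  | zero => simp [dyadicDirichlet, dyadicWalsh.zero_eq_one]
  | succ b ih =>
    rw [pow_succ, mul_two, two_pow_add le_rfl, ← one_add_mul]
    exact mul_nonneg (by linarith [dyadicWalsh.neg_one_le (2 ^ b) z]) ih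

lemma two_pow_eq (z : Fin A → Bool) : dyadicDirichlet (2 ^ A) z = if z = 0 then 2 ^ A else 0 := by
  induction A with
  | zero => simp [dyadicDirichlet, dyadicWalsh.zero_eq_one, Subsingleton.elim z 0]
  | succ A ih =>
    induction z using Fin.consCases with
    | _ e z =>
      have h_zero : (Fin.cons e z : Fin (A + 1) → Bool) = 0 ↔ e = false ∧ z = 0 := by
        rw [funext_iff, Fin.forall_fin_succ, funext_iff]
        rfl
      rw [pow_succ', two_mul_cons, ih]
      simp only [h_zero]
      by_cases hz : z = 0 <;> cases e <;> simp [hz, boolSign, pow_succ', one_add_one_eq_two]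

lemma expect_eq_one {i : ℕ} (hi0 : 0 < i) (hi : i ≤ 2 ^ A) :
    𝔼 z : Fin A → Bool, dyadicDirichlet i z = 1 := by
  simp only [dyadicDirichlet, Finset.expect_sum_comm]
  rw [Finset.sum_congr rfl fun k hk => expect_dyadicWalsh ((Finset.mem_range.1 hk).trans_le hi)]
  simp [hi0]

end dyadicDirichlet

/-- The unnormalized Walsh–Fejér kernel `D_1 + ⋯ + D_n` on `(ℤ/2)^A`. -/
def dyadicFejerSum {A : ℕ} (n : ℕ) (z : Fin A → Bool) : ℝ :=
  ∑ i ∈ Finset.range n, dyadicDirichlet (i + 1) z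

namespace dyadicFejerSum

variable {A : ℕ}

lemma two_pow_add {b m : ℕ} (hm : m ≤ 2 ^ b) (z : Fin A → Bool) :
    dyadicFejerSum (2 ^ b + m) z = dyadicFejerSum (2 ^ b) z + m * dyadicDirichlet (2 ^ b) z
      + dyadicWalsh (2 ^ b) z * dyadicFejerSum m z := by
  have h_tail : ∑ i ∈ Finset.range m, dyadicDirichlet (2 ^ b + i + 1) z
      = m * dyadicDirichlet (2 ^ b) z + dyadicWalsh (2 ^ b) z * dyadicFejerSum m z := by
    rw [Finset.sum_congr rfl fun i hi => by
      rw [add_assoc, dyadicDirichlet.two_pow_add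
        ((Nat.succ_le_of_lt (Finset.mem_range.1 hi)).trans hm)], Finset.sum_add_distrib,
      Finset.sum_const, Finset.card_range, nsmul_eq_mul, ← Finset.mul_sum, dyadicFejerSum]
  rw [dyadicFejerSum, Finset.sum_range_add, h_tail, ← add_assoc]
  rfl

lemma two_pow_nonneg (b : ℕ) (z : Fin A → Bool) : 0 ≤ dyadicFejerSum (2 ^ b) z := by
  induction b with
  | zero => simp [dyadicFejerSum, dyadicDirichlet, dyadicWalsh.zero_eq_one]
  | succ b ih =>
    have h_sum := mul_nonneg (a := 1 + dyadicWalsh (2 ^ b) z)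
      (by linarith [dyadicWalsh.neg_one_le (2 ^ b) z]) ih
    have h_dirichlet := mul_nonneg (Nat.cast_nonneg (α := ℝ) (2 ^ b))
      (dyadicDirichlet.two_pow_nonneg b z)
    rw [pow_succ, mul_two, two_pow_add le_rfl]
    linarith

lemma expect_eq {n : ℕ} (hn : n ≤ 2 ^ A) : 𝔼 z : Fin A → Bool, dyadicFejerSum n z = n := by
  simp only [dyadicFejerSum, Finset.expect_sum_comm]
  rw [Finset.sum_congr rfl fun i hi => dyadicDirichlet.expect_eq_one i.succ_pos
    ((Nat.succ_le_of_lt (Finset.mem_range.1 hi)).trans hn)]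
  simp

lemma expect_abs_le {n : ℕ} (hn : n ≤ 2 ^ A) :
    𝔼 z : Fin A → Bool, |dyadicFejerSum n z| ≤ 2 * n := by
  induction n using Nat.strong_induction_on with
  | _ n ih =>
    rcases n.eq_zero_or_pos with rfl | hpos
    · simp [dyadicFejerSum]
    obtain ⟨m, hm⟩ := Nat.exists_eq_add_of_le (Nat.pow_log_le_self 2 hpos.ne')
    have hlt : n < 2 ^ (Nat.log 2 n + 1) := Nat.lt_pow_succ_log_self one_lt_two n
    set b := Nat.log 2 n
    have hb : 0 < 2 ^ b := by positivity
    have hmb : m ≤ 2 ^ b := by omega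
    have h_abs (z : Fin A → Bool) : |dyadicFejerSum n z| ≤
        dyadicFejerSum (2 ^ b) z + m * dyadicDirichlet (2 ^ b) z + |dyadicFejerSum m z| := by
      rw [hm, two_pow_add hmb]
      refine (abs_add_le _ _).trans_eq ?_
      rw [abs_mul, dyadicWalsh.abs_eq_one, one_mul, abs_of_nonneg]
      exact add_nonneg (two_pow_nonneg b z)
        (mul_nonneg m.cast_nonneg (dyadicDirichlet.two_pow_nonneg b z))
    calc 𝔼 z : Fin A → Bool, |dyadicFejerSum n z|
        ≤ 𝔼 z : Fin A → Bool, (dyadicFejerSum (2 ^ b) z + m * dyadicDirichlet (2 ^ b) z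
          + |dyadicFejerSum m z|) := Finset.expect_le_expect fun z _ => h_abs z
      _ = (2 ^ b : ℕ) + m + 𝔼 z : Fin A → Bool, |dyadicFejerSum m z| := by
        rw [Finset.expect_add_distrib, Finset.expect_add_distrib, ← Finset.mul_expect,
          expect_eq (by omega), dyadicDirichlet.expect_eq_one hb (by omega), mul_one]
      _ ≤ (2 ^ b : ℕ) + m + 2 * m := by gcongr; exact ih m (by omega) (by omega)
      _ ≤ 2 * n := by
        have : (m : ℝ) ≤ (2 ^ b : ℕ) := by exact_mod_cast hmb
        rw [show (n : ℝ) = (2 ^ b : ℕ) + m by exact_mod_cast hm]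
        linarith

end dyadicFejerSum

lemma logSum_eq_sum_Ico (n : ℕ) : logSum n = ∑ i ∈ Finset.Ico 1 n, (1 : ℝ) / i := by
  cases n with
  | zero => simp [logSum]
  | succ n => rfl

lemma logSum_add_one_eq_sum_range (m : ℕ) :
    logSum (m + 1) = ∑ i ∈ Finset.range m, (1 : ℝ) / (i + 1) := by
  rw [logSum_eq_sum_Ico, Finset.sum_Ico_eq_sum_range]
  simp [add_comm]

lemma logSum_pos {n : ℕ} (hn : 2 ≤ n) : 0 < logSum n := by
  rw [logSum_eq_sum_Ico]
  refine Finset.sum_pos (fun i hi => ?_) ⟨1, Finset.mem_Ico.2 ⟨le_rfl, hn⟩⟩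
  have := (Finset.mem_Ico.1 hi).1
  positivity

/-- The weight of the `i`-th term of a logarithmic mean of order `n`. -/
def logWeight (n i : ℕ) : ℝ := 1 / (i * logSum n)

lemma logWeight_nonneg (n i : ℕ) : 0 ≤ logWeight n i := by
  rw [logWeight, logSum_eq_sum_Ico]
  positivity

lemma sum_logWeight {n : ℕ} (hn : 2 ≤ n) : ∑ i ∈ Finset.Ico 1 n, logWeight n i = 1 := by
  simp only [logWeight, ← div_div, ← Finset.sum_div, ← logSum_eq_sum_Ico]
  exact div_self (logSum_pos hn).ne'

lemma abs_sum_dyadicDirichlet_div_le {A : ℕ} (m : ℕ) (z : Fin A → Bool) :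
    |∑ i ∈ Finset.range (m + 1), (1 : ℝ) / (i + 1) * dyadicDirichlet (i + 1) z|
      ≤ 1 / (m + 1) * |dyadicFejerSum (m + 1) z|
        + ∑ i ∈ Finset.range m, 1 / (((i : ℝ) + 1) * (i + 2)) * |dyadicFejerSum (i + 1) z| := by
  have h_parts := Finset.sum_range_by_parts (fun i : ℕ => (1 : ℝ) / (i + 1))
    (fun i => dyadicDirichlet (i + 1) z) (m + 1)
  simp only [smul_eq_mul, Nat.add_sub_cancel] at h_parts
  rw [h_parts]
  refine (abs_sub _ _).trans (add_le_add ?_ ?_)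
  · rw [abs_mul, abs_of_nonneg (by positivity), dyadicFejerSum]
  · refine (Finset.abs_sum_le_sum_abs _ _).trans (Finset.sum_le_sum fun i _ => ?_)
    have h_diff : 1 / (((i + 1 : ℕ) : ℝ) + 1) - 1 / (i + 1) = -(1 / ((i + 1) * (i + 2))) := by
      push_cast
      field_simp
      ring
    rw [abs_mul, h_diff, abs_neg, abs_of_nonneg (by positivity), dyadicFejerSum]

lemma expect_abs_sum_dyadicDirichlet_div_le {A m : ℕ} (hA : m + 1 ≤ 2 ^ A) :
    𝔼 z : Fin A → Bool, |∑ i ∈ Finset.range (m + 1), (1 : ℝ) / (i + 1) * dyadicDirichlet (i + 1) z|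
      ≤ 2 * logSum (m + 2) := by
  refine (Finset.expect_le_expect fun z _ => abs_sum_dyadicDirichlet_div_le m z).trans ?_
  rw [Finset.expect_add_distrib, Finset.expect_sum_comm]
  simp only [← Finset.mul_expect]
  calc _ ≤ 1 / ((m : ℝ) + 1) * (2 * (m + 1 : ℕ)) + ∑ i ∈ Finset.range m,
        1 / (((i : ℝ) + 1) * (i + 2)) * (2 * (i + 1 : ℕ)) := by
        gcongr with i hi
        · exact dyadicFejerSum.expect_abs_le hA
        · exact dyadicFejerSum.expect_abs_le (by linarith [Finset.mem_range.1 hi])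
    _ = 2 * logSum (m + 2) := by
        rw [logSum_add_one_eq_sum_range, Finset.sum_range_succ', mul_add, Finset.mul_sum, add_comm]
        congr 1
        · refine Finset.sum_congr rfl fun i _ => ?_
          push_cast
          field_simp
          ring
        · push_cast
          field_simp
          simp

/-- The index of the partial sum in the `i`-th term of a logarithmic mean of order `n`: the
Nörlund mean if `β` holds, the Riesz mean otherwise. -/
def logMeanIndex (β : Prop) [Decidable β] (n i : ℕ) : ℕ := if β then n - i else i

/-- The kernel on `(ℤ/2)^A` of the Nörlund (if `β`) or Riesz (otherwise) logarithmic mean. -/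
def dyadicLogKernel {A : ℕ} (β : Prop) [Decidable β] (n : ℕ) (z : Fin A → Bool) : ℝ :=
  ∑ i ∈ Finset.Ico 1 n, logWeight n i * dyadicDirichlet (logMeanIndex β n i) z

lemma convOp_sum_mul {G ι : Type*} [Fintype G] [AddCommGroup G] (s : Finset ι) (w : ι → ℝ)
    (k : ι → G → ℝ) :
    convOp (fun z => ∑ i ∈ s, w i * k i z) = fun g x => ∑ i ∈ s, w i * convOp (k i) g x := by
  funext g x
  simp only [convOp, Finset.sum_mul, Finset.expect_sum_comm, Finset.mul_expect, mul_assoc]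

namespace LpBoundedBy

variable {A n : ℕ} {β : Prop} [Decidable β]

lemma convOp_norlundKernel (p : ℕ) (hβ : β) (hn : 2 ≤ n) (hA : n ≤ 2 ^ A) :
    LpBoundedBy (p + 2) (20 * (p + 2)) (convOp (dyadicLogKernel (A := A) β n)) := by
  have h_comb := linearCombination (s := Finset.Ico 1 n) (logWeight n) (p := p + 1)
    (C := 20 * (p + 2)) (T := fun i => convOp (dyadicDirichlet (A := A) (logMeanIndex β n i)))
    fun i hi => by
      have := Finset.mem_Ico.1 hi
      exact convOp_dirichlet p (by rw [logMeanIndex, if_pos hβ]; omega)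
  simp only [abs_of_nonneg (logWeight_nonneg n _)] at h_comb
  rwa [sum_logWeight hn, one_mul, ← convOp_sum_mul] at h_comb

lemma convOp_rieszKernel (p : ℕ) (hβ : ¬β) (hn : 2 ≤ n) (hA : n ≤ 2 ^ A) :
    LpBoundedBy (p + 1) 2 (convOp (dyadicLogKernel (A := A) β n)) := by
  obtain ⟨m, rfl⟩ := Nat.exists_eq_add_of_le' hn
  have hl := logSum_pos hn
  have h_eq (z : Fin A → Bool) : dyadicLogKernel β (m + 2) z
      = (∑ i ∈ Finset.range (m + 1), (1 : ℝ) / (i + 1) * dyadicDirichlet (i + 1) z)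
        / logSum (m + 2) := by
    rw [dyadicLogKernel, Finset.sum_Ico_eq_sum_range, Finset.sum_div]
    refine Finset.sum_congr rfl fun i _ => ?_
    rw [logMeanIndex, if_neg hβ, logWeight, add_comm 1 i, ← div_div]
    push_cast
    ring
  refine convOp_of_expect_abs_le p ?_
  simp only [h_eq, abs_div, ← Finset.expect_div]
  rw [abs_of_pos hl, div_le_iff₀ hl]
  exact expect_abs_sum_dyadicDirichlet_div_le (by omega)

end LpBoundedBy

/-- The kernel on `((ℤ/2)^A)^d` of the mixed logarithmic mean. -/
def dyadicMixedKernel {A d : ℕ} (B : Finset (Fin d)) (n : Fin d → ℕ) (z : Fin d → Fin A → Bool) :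
    ℝ :=
  ∏ j, dyadicLogKernel (j ∈ B) (n j) (z j)

lemma LpBoundedBy.convOp_mixedKernel (p : ℕ) {A d : ℕ} (B : Finset (Fin d)) {n : Fin d → ℕ}
    (hn : ∀ j, 2 ≤ n j) (hA : ∀ j, n j ≤ 2 ^ A) :
    LpBoundedBy (p + 2) (2 ^ d * 20 ^ B.card * ((p : ℝ) + 2) ^ B.card)
      (convOp (dyadicMixedKernel (A := A) B n)) := by
  have h_factor (j : Fin d) : LpBoundedBy (p + 2) (if j ∈ B then 20 * ((p : ℝ) + 2) else 2)
      (convOp (dyadicLogKernel (A := A) (j ∈ B) (n j))) := by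
    split_ifs with hj
    · exact convOp_norlundKernel p hj (hn j) (hA j)
    · exact convOp_rieszKernel (p + 1) hj (hn j) (hA j)
  have h_nonneg (j : Fin d) : 0 ≤ if j ∈ B then 20 * ((p : ℝ) + 2) else 2 := by
    split_ifs <;> positivity
  refine (convOp_pi (p + 2) _ _ h_nonneg h_factor).mono
    (Finset.prod_nonneg fun j _ => h_nonneg j) ?_
  calc ∏ j : Fin d, (if j ∈ B then 20 * ((p : ℝ) + 2) else 2)
      ≤ ∏ j : Fin d, 2 * (if j ∈ B then 20 * ((p : ℝ) + 2) else 1) := by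
        refine Finset.prod_le_prod (fun j _ => h_nonneg j) fun j _ => ?_
        split_ifs
        · exact le_mul_of_one_le_left (by positivity) one_le_two
        · norm_num
    _ = 2 ^ d * 20 ^ B.card * ((p : ℝ) + 2) ^ B.card := by
        rw [Finset.prod_mul_distrib, Finset.prod_const, Finset.card_univ, Fintype.card_fin,
          Finset.prod_ite_mem, Finset.univ_inter, Finset.prod_const, mul_pow, mul_assoc]

/-! ### Dyadic intervals and cubes -/

/-- The first `A` binary digits of a real number. -/
def dyadicDigits (A : ℕ) (x : ℝ) : Fin A → Bool :=
  fun j => !decide (Int.fract (2 ^ (j : ℕ) * x) < 1 / 2)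

lemma boolSign_dyadicDigits {A : ℕ} (x : ℝ) (j : Fin A) :
    boolSign (dyadicDigits A x j) = rademacher j x := by
  by_cases h : Int.fract (2 ^ (j : ℕ) * x) < 1 / 2 <;>
    simp only [boolSign, dyadicDigits, rademacher, r0, h] <;> simp

lemma measurable_dyadicDigits (A : ℕ) : Measurable (dyadicDigits A) := by
  refine measurable_pi_lambda _ fun j => (measurable_of_countable Bool.not).comp ?_
  exact measurable_to_bool (by
    simpa [Set.preimage] using measurableSet_lt
      (measurable_fract.comp (measurable_const_mul ((2 : ℝ) ^ (j : ℕ)))) measurable_const)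

lemma dyadicDigits_sub_natCast (A : ℕ) (x : ℝ) (m : ℕ) :
    dyadicDigits A (x - m) = dyadicDigits A x := by
  funext j
  have h_shift : (2 : ℝ) ^ (j : ℕ) * (x - m) = 2 ^ (j : ℕ) * x - (2 ^ (j : ℕ) * m : ℕ) := by
    push_cast
    ring
  simp only [dyadicDigits, h_shift, Int.fract_sub_natCast]

lemma dyadicDigits_succ (A : ℕ) (x : ℝ) :
    dyadicDigits (A + 1) x = Fin.cons (!decide (Int.fract x < 1 / 2)) (dyadicDigits A (2 * x)) := by
  funext j
  refine Fin.cases ?_ (fun i => ?_) j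
  · simp [dyadicDigits]
  · simp [dyadicDigits, pow_succ, mul_assoc]

/-- The dyadic subinterval of `[0,1)` of length `2 ^ (-A)` with the given binary digits. -/
def dyadicInterval {A : ℕ} (c : Fin A → Bool) : Set ℝ := {x ∈ Set.Ico 0 1 | dyadicDigits A x = c}

namespace dyadicInterval

variable {A : ℕ}

lemma cons_eq_preimage (e : Bool) (c : Fin A → Bool) :
    dyadicInterval (Fin.cons e c : Fin (A + 1) → Bool)
      = (fun x : ℝ => 2 * x) ⁻¹' ((fun x => x - (e.toNat : ℝ)) ⁻¹' dyadicInterval c) := by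
  ext x
  have h_digit (hx : x ∈ Set.Ico (0 : ℝ) 1) :
      (!decide (Int.fract x < 1 / 2)) = e ↔ 2 * x - (e.toNat : ℝ) ∈ Set.Ico (0 : ℝ) 1 := by
    obtain ⟨h0, h1⟩ := hx
    rw [Int.fract_eq_self.2 ⟨h0, h1⟩]
    cases e with
    | false =>
      simp only [Bool.not_eq_false', decide_eq_true_eq, Bool.toNat_false, Nat.cast_zero, sub_zero]
      exact ⟨fun h => ⟨by linarith, by linarith⟩, fun h => by linarith [h.2]⟩
    | true =>
      simp only [Bool.not_eq_true', decide_eq_false_iff_not, Bool.toNat_true, Nat.cast_one, not_lt]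
      exact ⟨fun h => ⟨by linarith, by linarith⟩, fun h => by linarith [h.1]⟩
  have h_mem (h : 2 * x - (e.toNat : ℝ) ∈ Set.Ico (0 : ℝ) 1) : x ∈ Set.Ico (0 : ℝ) 1 := by
    have he : (e.toNat : ℝ) ≤ 1 := by exact_mod_cast e.toNat_le
    exact ⟨by linarith [h.1, (Nat.cast_nonneg e.toNat : (0 : ℝ) ≤ e.toNat)], by linarith [h.2]⟩
  simp only [dyadicInterval, Set.mem_preimage, Set.mem_ofPred_eq, dyadicDigits_succ,
    Fin.cons_inj, dyadicDigits_sub_natCast]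
  exact ⟨fun ⟨hx, he, hc⟩ => ⟨(h_digit hx).1 he, hc⟩,
    fun ⟨hx, hc⟩ => ⟨h_mem hx, (h_digit (h_mem hx)).2 hx, hc⟩⟩

lemma volume_eq (c : Fin A → Bool) : volume (dyadicInterval c) = (2 ^ A)⁻¹ := by
  induction A with
  | zero =>
    simp only [dyadicInterval, eq_iff_true_of_subsingleton, and_true, Set.ofPred_mem_eq]
    simp
  | succ A ih =>
    have h_shift (a : ℝ) (S : Set ℝ) : volume ((fun x => x - a) ⁻¹' S) = volume S := by
      simp only [sub_eq_add_neg, measure_preimage_add_right]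
    rw [← Fin.cons_self_tail c, cons_eq_preimage, Real.volume_preimage_mul_left two_ne_zero,
      h_shift, ih, pow_succ', ENNReal.mul_inv (by simp) (by simp), abs_of_pos (by positivity),
      ENNReal.ofReal_inv_of_pos two_pos, ENNReal.ofReal_ofNat]

lemma abs_sub_le {c : Fin A → Bool} {x y : ℝ} (hx : x ∈ dyadicInterval c)
    (hy : y ∈ dyadicInterval c) : |x - y| ≤ (1 / 2) ^ A := by
  induction A generalizing x y with
  | zero =>
    rw [pow_zero, abs_le]
    constructor <;> linarith [hx.1.1, hx.1.2, hy.1.1, hy.1.2]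
  | succ A ih =>
    rw [← Fin.cons_self_tail c, cons_eq_preimage] at hx hy
    have h_half := ih hx hy
    rw [sub_sub_sub_cancel_right, ← mul_sub, abs_mul, abs_of_pos two_pos] at h_half
    rw [pow_succ]
    linarith

end dyadicInterval

/-- The binary digits of all coordinates of a point, which identify the dyadic cube of side
`2 ^ (-A)` containing it. -/
def cubeDigits {d : ℕ} (A : ℕ) (x : Fin d → ℝ) : Fin d → Fin A → Bool :=
  fun j => dyadicDigits A (x j)

instance isProbabilityMeasure_cubeMeasure (d : ℕ) : IsProbabilityMeasure (cubeMeasure d) := by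
  refine ⟨?_⟩
  rw [cubeMeasure, unitCube, Measure.restrict_apply_univ, volume_pi_pi]
  simp

section cubeDigits

variable {d A : ℕ}

lemma measurable_cubeDigits : Measurable (cubeDigits (d := d) A) :=
  measurable_pi_lambda _ fun j => (measurable_dyadicDigits A).comp (measurable_pi_apply j)

lemma cubeMeasure_cubeDigits_preimage_singleton (c : Fin d → Fin A → Bool) :
    cubeMeasure d (cubeDigits A ⁻¹' {c}) = ((2 ^ A) ^ d)⁻¹ := by
  have h_cell : cubeDigits A ⁻¹' {c} ∩ unitCube d
      = Set.univ.pi fun j => dyadicInterval (c j) := by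
    ext x
    simp only [unitCube, dyadicInterval, cubeDigits, Set.mem_inter_iff, Set.mem_preimage,
      Set.mem_singleton_iff, Set.mem_univ_pi, Set.mem_ofPred_eq, funext_iff (g := c),
      ← forall_and, and_comm]
  rw [cubeMeasure, Measure.restrict_apply (measurable_cubeDigits (measurableSet_singleton c)),
    h_cell, volume_pi_pi]
  simp only [dyadicInterval.volume_eq, Finset.prod_const, Finset.card_univ, Fintype.card_fin,
    ENNReal.inv_pow]

lemma integral_comp_cubeDigits (Φ : (Fin d → Fin A → Bool) → ℝ) :
    ∫ x, Φ (cubeDigits A x) ∂cubeMeasure d = 𝔼 c, Φ c := by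
  have := Measure.isProbabilityMeasure_map (μ := cubeMeasure d)
    (measurable_cubeDigits (A := A)).aemeasurable
  rw [← integral_map measurable_cubeDigits.aemeasurable
    (measurable_of_finite Φ).aestronglyMeasurable, integral_fintype Integrable.of_finite,
    Fintype.expect_eq_sum_div_card, Finset.sum_div]
  refine Finset.sum_congr rfl fun c _ => ?_
  rw [measureReal_def, Measure.map_apply measurable_cubeDigits (measurableSet_singleton c),
    cubeMeasure_cubeDigits_preimage_singleton, smul_eq_mul, div_eq_inv_mul]
  simp

lemma memLp_top_comp_cubeDigits (Φ : (Fin d → Fin A → Bool) → ℝ) :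
    MemLp (fun x => Φ (cubeDigits A x)) ⊤ (cubeMeasure d) :=
  memLp_top_of_bound
    ((measurable_of_finite Φ).comp measurable_cubeDigits).aestronglyMeasurable (∑ c, |Φ c|)
    (Eventually.of_forall fun _ => Finset.single_le_sum (f := fun c => |Φ c|)
      (fun _ _ => abs_nonneg _) (Finset.mem_univ _))

end cubeDigits

/-! ### Walsh multipliers -/

lemma walsh_eq_dyadicWalsh {A k : ℕ} (hk : k < 2 ^ A) (x : ℝ) :
    walsh k x = dyadicWalsh k (dyadicDigits A x) := by
  have h_range {m : ℕ} (hm : k < 2 ^ m) :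
      ∏ j ∈ Finset.range m, (if k.testBit j then rademacher j x else 1)
        = ∏ j ∈ Finset.range (max m (max A (k + 1))),
          if k.testBit j then rademacher j x else 1 := by
    refine Finset.prod_subset (by simp) fun j _ hj => ?_
    have hmj : m ≤ j := not_lt.1 (mt Finset.mem_range.2 hj)
    rw [Nat.testBit_lt_two_pow (hm.trans_le (Nat.pow_le_pow_right two_pos hmj))]
    rfl
  simp only [walsh, dyadicWalsh, boolSign_dyadicDigits]
  rw [h_range (Nat.lt_two_pow_self.trans_le (Nat.pow_le_pow_right two_pos k.le_succ)),
    ← Finset.prod_range fun j => if k.testBit j then rademacher j x else 1, h_range hk]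
  congr 2
  omega

/-- The Walsh function of a multi-index `k` on `((ℤ/2)^A)^d`. -/
def dyadicWalshPi {A d : ℕ} (k : Fin d → ℕ) (c : Fin d → Fin A → Bool) : ℝ :=
  ∏ i, dyadicWalsh (k i) (c i)

lemma prod_walsh_eq_dyadicWalshPi {A d : ℕ} {k : Fin d → ℕ} (hk : ∀ j, k j < 2 ^ A)
    (x : Fin d → ℝ) : ∏ i, walsh (k i) (x i) = dyadicWalshPi k (cubeDigits A x) :=
  Finset.prod_congr rfl fun i _ => walsh_eq_dyadicWalsh (hk i) (x i)

lemma walshCoef_comp_cubeDigits {A d : ℕ} {k : Fin d → ℕ} (hk : ∀ j, k j < 2 ^ A)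
    (Φ : (Fin d → Fin A → Bool) → ℝ) :
    walshCoef (fun x => Φ (cubeDigits A x)) k = 𝔼 c, Φ c * dyadicWalshPi k c := by
  simp only [walshCoef, prod_walsh_eq_dyadicWalshPi hk]
  exact integral_comp_cubeDigits fun c => Φ c * dyadicWalshPi k c

lemma lt_two_pow_sum {d : ℕ} (k : Fin d → ℕ) (j : Fin d) : k j < 2 ^ ∑ i, k i :=
  Nat.lt_two_pow_self.trans_le (Nat.pow_le_pow_right two_pos
    (Finset.single_le_sum (fun _ _ => Nat.zero_le _) (Finset.mem_univ j)))

lemma integrable_mul_prod_walsh {d : ℕ} {f : (Fin d → ℝ) → ℝ} (hf : Integrable f (cubeMeasure d))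
    (k : Fin d → ℕ) : Integrable (fun x => f x * ∏ i, walsh (k i) (x i)) (cubeMeasure d) := by
  simp only [prod_walsh_eq_dyadicWalshPi (lt_two_pow_sum k)]
  exact hf.mul_of_top_left (memLp_top_comp_cubeDigits _)

/-- The multi-indices of the Walsh functions occurring in the mixed mean of order `n`. -/
def indexBox {d : ℕ} (n : Fin d → ℕ) : Finset (Fin d → ℕ) :=
  Fintype.piFinset fun j => Finset.range (n j)

lemma mem_indexBox {d : ℕ} {n k : Fin d → ℕ} : k ∈ indexBox n ↔ ∀ j, k j < n j := by
  simp only [indexBox, Fintype.mem_piFinset, Finset.mem_range]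

/-- The factor by which the logarithmic mean of order `n` multiplies the `k`-th Walsh function. -/
def logMultiplier (β : Prop) [Decidable β] (n k : ℕ) : ℝ :=
  ∑ i ∈ Finset.Ico 1 n, if k < logMeanIndex β n i then logWeight n i else 0

/-- The factor by which the mixed logarithmic mean multiplies the Walsh function of index `k`. -/
def mixedMultiplier {d : ℕ} (B : Finset (Fin d)) (n k : Fin d → ℕ) : ℝ :=
  ∏ j, logMultiplier (j ∈ B) (n j) (k j)

lemma logMeanIndex_le (β : Prop) [Decidable β] {n i : ℕ} (hi : i ∈ Finset.Ico 1 n) :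
    logMeanIndex β n i ≤ n := by
  have := Finset.mem_Ico.1 hi
  rw [logMeanIndex]
  split_ifs <;> omega

lemma rectPartialSum_eq_sum_indexBox {d : ℕ} (f : (Fin d → ℝ) → ℝ) {N n : Fin d → ℕ}
    (h : ∀ j, N j ≤ n j) (x : Fin d → ℝ) :
    rectPartialSum f N x = ∑ k ∈ indexBox n,
      (∏ j, if k j < N j then (1 : ℝ) else 0) * (walshCoef f k * ∏ i, walsh (k i) (x i)) := by
  have h_filter : Fintype.piFinset (fun i => Finset.range (N i))
      = (indexBox n).filter fun k => ∀ j ∈ Finset.univ, k j < N j := by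
    ext k
    simp only [Fintype.mem_piFinset, Finset.mem_range, Finset.mem_filter, mem_indexBox,
      Finset.mem_univ, forall_const]
    exact ⟨fun hk => ⟨fun j => (hk j).trans_le (h j), hk⟩, And.right⟩
  rw [rectPartialSum, h_filter, Finset.sum_filter]
  refine Finset.sum_congr rfl fun k _ => ?_
  rw [Finset.prod_ite_zero]
  split_ifs <;> simp

lemma mixedMultiplier_eq {d : ℕ} (B : Finset (Fin d)) (n k : Fin d → ℕ) :
    mixedMultiplier B n k = (∏ j, logSum (n j))⁻¹ *
      ∑ i ∈ Fintype.piFinset (fun j => Finset.Ico 1 (n j)),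
        (∏ j, if k j < logMeanIndex (j ∈ B) (n j) (i j) then (1 : ℝ) else 0) / ∏ j, (i j : ℝ) := by
  simp only [mixedMultiplier, logMultiplier, Finset.prod_univ_sum, Finset.mul_sum,
    ← Finset.prod_inv_distrib, ← Finset.prod_div_distrib, ← Finset.prod_mul_distrib]
  refine Finset.sum_congr rfl fun i _ => Finset.prod_congr rfl fun j _ => ?_
  split_ifs
  · rw [logWeight, one_div, mul_inv, mul_comm, one_div]
  · simp

lemma mixedLogMean_eq_sum_multiplier {d : ℕ} (B : Finset (Fin d)) (f : (Fin d → ℝ) → ℝ)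
    (n : Fin d → ℕ) (x : Fin d → ℝ) :
    mixedLogMean B f n x = ∑ k ∈ indexBox n,
      mixedMultiplier B n k * (walshCoef f k * ∏ i, walsh (k i) (x i)) := by
  have h_rect (i) (hi : i ∈ Fintype.piFinset fun j => Finset.Ico 1 (n j)) :=
    rectPartialSum_eq_sum_indexBox f (x := x) (n := n)
      (N := fun j => if j ∈ B then n j - i j else i j)
      fun j => logMeanIndex_le (j ∈ B) (Fintype.mem_piFinset.1 hi j)
  rw [mixedLogMean, Finset.sum_congr rfl fun i hi => by rw [h_rect i hi, Finset.sum_div],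
    Finset.sum_comm, Finset.mul_sum]
  refine Finset.sum_congr rfl fun k _ => ?_
  rw [mixedMultiplier_eq, mul_assoc, Finset.sum_mul]
  refine congrArg _ (Finset.sum_congr rfl fun i _ => ?_)
  rw [mul_div_right_comm]
  rfl

/-! ### Duality and transfer of the mixed means -/

lemma dyadicLogKernel_eq_sum_multiplier {A : ℕ} (β : Prop) [Decidable β] (n : ℕ)
    (z : Fin A → Bool) :
    dyadicLogKernel β n z = ∑ k ∈ Finset.range n, logMultiplier β n k * dyadicWalsh k z := by
  simp only [dyadicLogKernel, logMultiplier, Finset.sum_mul, dyadicDirichlet, Finset.mul_sum]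
  rw [Finset.sum_comm' (t' := Finset.range n) (s' := fun k =>
    (Finset.Ico 1 n).filter fun i => k < logMeanIndex β n i)]
  · refine Finset.sum_congr rfl fun k _ => ?_
    rw [Finset.sum_filter]
    exact Finset.sum_congr rfl fun i _ => (ite_zero_mul _ _ _).symm
  · intro i k
    simp only [Finset.mem_range, Finset.mem_filter]
    exact ⟨fun h => ⟨h, h.2.trans_le (logMeanIndex_le β h.1)⟩, And.left⟩

lemma convOp_mixedKernel_eq_sum_multiplier {A d : ℕ} (B : Finset (Fin d)) (n : Fin d → ℕ)
    (Φ : (Fin d → Fin A → Bool) → ℝ) (c : Fin d → Fin A → Bool) :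
    convOp (dyadicMixedKernel B n) Φ c = ∑ k ∈ indexBox n,
      mixedMultiplier B n k * ((𝔼 t, Φ t * dyadicWalshPi k t) * dyadicWalshPi k c) := by
  have h_kernel (t : Fin d → Fin A → Bool) : dyadicMixedKernel B n (c - t)
      = ∑ k ∈ indexBox n, mixedMultiplier B n k * (dyadicWalshPi k c * dyadicWalshPi k t) := by
    simp only [dyadicMixedKernel, dyadicLogKernel_eq_sum_multiplier, Finset.prod_univ_sum, indexBox,
      mixedMultiplier, dyadicWalshPi, ← Finset.prod_mul_distrib, Pi.sub_apply,
      dyadicWalsh.sub_eq_mul]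
  simp only [convOp, h_kernel, Finset.sum_mul, Finset.expect_sum_comm, Finset.expect_mul,
    Finset.mul_expect]
  exact Finset.sum_congr rfl fun k _ => Finset.expect_congr rfl fun t _ => by ring

lemma mixedLogMean_comp_cubeDigits {A d : ℕ} (B : Finset (Fin d)) {n : Fin d → ℕ}
    (hA : ∀ j, n j ≤ 2 ^ A) (Φ : (Fin d → Fin A → Bool) → ℝ) (x : Fin d → ℝ) :
    mixedLogMean B (fun x => Φ (cubeDigits A x)) n x
      = convOp (dyadicMixedKernel B n) Φ (cubeDigits A x) := by
  rw [mixedLogMean_eq_sum_multiplier, convOp_mixedKernel_eq_sum_multiplier]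
  refine Finset.sum_congr rfl fun k hk => ?_
  have hkA (j : Fin d) : k j < 2 ^ A := (mem_indexBox.1 hk j).trans_le (hA j)
  rw [walshCoef_comp_cubeDigits hkA, prod_walsh_eq_dyadicWalshPi hkA]

lemma integral_mixedLogMean_mul {d : ℕ} (B : Finset (Fin d)) (n : Fin d → ℕ)
    (f : (Fin d → ℝ) → ℝ) {g : (Fin d → ℝ) → ℝ} (hg : Integrable g (cubeMeasure d)) :
    ∫ x, mixedLogMean B f n x * g x ∂cubeMeasure d
      = ∑ k ∈ indexBox n, mixedMultiplier B n k * (walshCoef f k * walshCoef g k) := by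
  have h_term (x : Fin d → ℝ) : mixedLogMean B f n x * g x = ∑ k ∈ indexBox n,
      mixedMultiplier B n k * walshCoef f k * (g x * ∏ i, walsh (k i) (x i)) := by
    rw [mixedLogMean_eq_sum_multiplier, Finset.sum_mul]
    exact Finset.sum_congr rfl fun k _ => by ring
  simp only [h_term]
  rw [integral_finsetSum _ fun k _ => (integrable_mul_prod_walsh hg k).const_mul _]
  exact Finset.sum_congr rfl fun k _ => (integral_const_mul _ _).trans (mul_assoc _ _ _)

lemma integral_mixedLogMean_mul_comm {d : ℕ} (B : Finset (Fin d)) (n : Fin d → ℕ)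
    {f g : (Fin d → ℝ) → ℝ} (hf : Integrable f (cubeMeasure d))
    (hg : Integrable g (cubeMeasure d)) :
    ∫ x, mixedLogMean B f n x * g x ∂cubeMeasure d
      = ∫ x, f x * mixedLogMean B g n x ∂cubeMeasure d := by
  simp only [mul_comm (f _)]
  rw [integral_mixedLogMean_mul B n f hg, integral_mixedLogMean_mul B n g hf]
  simp only [mul_comm (walshCoef f _)]

/-! ### Extrapolation from moment growth to `L log^b L` -/

/-- The moments of `τ` of order `p ≥ 2` grow at most like those of `b`-fold powers of functions of
exponential type: `‖τ‖_p ≤ C p ^ b`. -/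
structure MomentGrowth {Ω : Type*} [MeasurableSpace Ω] (C : ℝ) (b : ℕ) (τ : Ω → ℝ)
    (μ : Measure Ω) : Prop where
  aestronglyMeasurable : AEStronglyMeasurable τ μ
  lintegral_enorm_pow_le (p : ℕ) (hp : 2 ≤ p) :
    ∫⁻ x, ‖τ x‖ₑ ^ p ∂μ ≤ ENNReal.ofReal ((C * (p : ℝ) ^ b) ^ p)

/-- The size above which a function with moment growth `(C, b)` counts as large on the `k`-th
layer `log (1 + |f|) ≈ k` of `f`: four times the bound on its norm of order `2 * k`. -/
def layerThreshold (C : ℝ) (b k : ℕ) : ℝ := 4 * (C * (2 * k : ℕ) ^ b)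

section Layers

variable {C : ℝ} {b : ℕ}

lemma layerThreshold_pos (hC : 0 < C) {k : ℕ} (hk : 1 ≤ k) : 0 < layerThreshold C b k := by
  unfold layerThreshold
  positivity

lemma exists_layer_mul_le (hC : 0 < C) {a t : ℝ} (ha : 0 ≤ a) (ht : 0 ≤ t) {K : ℕ} (hK : 1 ≤ K)
    (haK : K ≤ Real.log (1 + a)) :
    ∃ k ≥ K, a * t ≤ 4 * C * 4 ^ b * (a * Real.log (1 + a) ^ b)
      + Real.exp k * layerThreshold C b k * (t / layerThreshold C b k) ^ (2 * k) := by
  set k := ⌈Real.log (1 + a)⌉₊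
  have hKk : K ≤ k := by exact_mod_cast haK.trans (Nat.le_ceil _)
  have hL : 0 < layerThreshold C b k := layerThreshold_pos hC (hK.trans hKk)
  refine ⟨k, hKk, ?_⟩
  rcases le_total t (layerThreshold C b k) with h_small | h_large
  · have hK' : (1 : ℝ) ≤ K := by exact_mod_cast hK
    have hk_log : (k : ℝ) ≤ 2 * Real.log (1 + a) := by
      linarith [Nat.ceil_lt_add_one (R := ℝ) (by linarith : 0 ≤ Real.log (1 + a))]
    calc a * t ≤ a * (4 * (C * (2 * (2 * Real.log (1 + a))) ^ b)) := by
          refine mul_le_mul_of_nonneg_left (h_small.trans ?_) ha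
          rw [layerThreshold, Nat.cast_mul, Nat.cast_ofNat]
          gcongr
      _ = 4 * C * 4 ^ b * (a * Real.log (1 + a) ^ b) := by
          rw [← mul_assoc 2 2, mul_pow]
          ring
      _ ≤ _ := le_add_of_nonneg_right (by positivity)
  · have h_exp : a ≤ Real.exp k := by
      linarith [(Real.log_le_iff_le_exp (by linarith)).1 (Nat.le_ceil (Real.log (1 + a)))]
    have h_one : 1 ≤ t / layerThreshold C b k := (one_le_div hL).2 h_large
    calc a * t ≤ Real.exp k * t := by gcongr
      _ = Real.exp k * layerThreshold C b k * (t / layerThreshold C b k) := by field_simp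
      _ ≤ Real.exp k * layerThreshold C b k * (t / layerThreshold C b k) ^ (2 * k) := by
          gcongr
          exact le_self_pow₀ h_one (by omega)
      _ ≤ _ := by
          have hlog : 0 ≤ Real.log (1 + a) := Real.log_nonneg (by linarith)
          exact le_add_of_nonneg_left (by positivity)

lemma tsum_ofReal_layerThreshold_mul_pow_ne_top :
    ∑' k, ENNReal.ofReal (layerThreshold C b k * (Real.exp 1 / 16) ^ k) ≠ ⊤ := by
  have h_ratio : ‖Real.exp 1 / 16‖ < 1 := by
    rw [Real.norm_of_nonneg (by positivity)]
    linarith [Real.exp_one_lt_three]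
  refine (((summable_pow_mul_geometric_of_norm_lt_one b h_ratio).mul_left
    (4 * C * 2 ^ b)).congr fun k => ?_).tsum_ofReal_ne_top
  rw [layerThreshold, Nat.cast_mul, Nat.cast_ofNat, mul_pow]
  ring

end Layers

/-- The set on which `log (1 + |f|) ≥ K`. -/
def logTail {Ω : Type*} (f : Ω → ℝ) (K : ℕ) : Set Ω := {x | (K : ℝ) ≤ Real.log (1 + |f x|)}

section Extrapolation

variable {Ω : Type*} [MeasurableSpace Ω] {μ : Measure Ω} {C : ℝ} {b : ℕ} {f τ : Ω → ℝ}

lemma MomentGrowth.lintegral_layer_le (hC : 0 < C) (hτ : MomentGrowth C b τ μ) {k : ℕ}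
    (hk : 1 ≤ k) :
    ∫⁻ x, ENNReal.ofReal (Real.exp k * layerThreshold C b k
        * (|τ x| / layerThreshold C b k) ^ (2 * k)) ∂μ
      ≤ ENNReal.ofReal (layerThreshold C b k * (Real.exp 1 / 16) ^ k) := by
  have hL := layerThreshold_pos (b := b) hC hk
  set L := layerThreshold C b k with hL_def
  have h_split (x : Ω) : ENNReal.ofReal (Real.exp k * L * (|τ x| / L) ^ (2 * k))
      = ENNReal.ofReal (Real.exp k * L / L ^ (2 * k)) * ‖τ x‖ₑ ^ (2 * k) := by
    rw [← ofReal_norm, Real.norm_eq_abs, ← ENNReal.ofReal_pow (abs_nonneg _),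
      ← ENNReal.ofReal_mul (by positivity), div_pow, mul_div_assoc', div_mul_eq_mul_div]
  have h_moment : (C * ((2 * k : ℕ) : ℝ) ^ b) ^ (2 * k) = L ^ (2 * k) * (1 / 16) ^ k := by
    rw [hL_def, layerThreshold, mul_pow 4, pow_mul 4 2 k, mul_right_comm, ← mul_pow]
    norm_num
  simp only [h_split]
  rw [lintegral_const_mul' _ _ ENNReal.ofReal_ne_top]
  calc _ ≤ ENNReal.ofReal (Real.exp k * L / L ^ (2 * k))
        * ENNReal.ofReal ((C * ((2 * k : ℕ) : ℝ) ^ b) ^ (2 * k)) := by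
        gcongr
        exact hτ.lintegral_enorm_pow_le (2 * k) (by omega)
    _ = ENNReal.ofReal (L * (Real.exp 1 / 16) ^ k) := by
        rw [← ENNReal.ofReal_mul (by positivity), h_moment, one_div, inv_pow, div_pow,
          ← Real.exp_nat_mul, mul_one]
        congr 1
        field_simp

lemma nullMeasurableSet_logTail (hf : AEStronglyMeasurable f μ) (K : ℕ) :
    NullMeasurableSet (logTail f K) μ :=
  nullMeasurableSet_le aemeasurable_const
    (Real.measurable_log.comp_aemeasurable (hf.aemeasurable.abs.const_add 1))

lemma MomentGrowth.setLIntegral_logTail_le (hC : 0 < C) (hτ : MomentGrowth C b τ μ)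
    (hf : AEStronglyMeasurable f μ) {K : ℕ} (hK : 1 ≤ K) :
    ∫⁻ x in logTail f K, ‖f x‖ₑ * ‖τ x‖ₑ ∂μ
      ≤ ∫⁻ x in logTail f K,
          ENNReal.ofReal (4 * C * 4 ^ b * (|f x| * Real.log (1 + |f x|) ^ b)) ∂μ
        + ∑' k, ENNReal.ofReal (layerThreshold C b (k + K) * (Real.exp 1 / 16) ^ (k + K)) := by
  set layer : ℕ → Ω → ENNReal := fun k x => ENNReal.ofReal
    (Real.exp k * layerThreshold C b k * (|τ x| / layerThreshold C b k) ^ (2 * k))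
  have hlayer_meas (k : ℕ) : AEMeasurable (layer k) μ :=
    (((hτ.aestronglyMeasurable.aemeasurable.abs.div_const _).pow_const _).const_mul
      _).ennreal_ofReal
  have h_pointwise (x : Ω) (hx : x ∈ logTail f K) : ‖f x‖ₑ * ‖τ x‖ₑ
      ≤ ENNReal.ofReal (4 * C * 4 ^ b * (|f x| * Real.log (1 + |f x|) ^ b))
        + ∑' k, layer (k + K) x := by
    obtain ⟨k, hKk, h_le⟩ := exists_layer_mul_le (b := b) hC (abs_nonneg (f x))
      (abs_nonneg (τ x)) hK hx
    obtain ⟨m, rfl⟩ := Nat.exists_eq_add_of_le' hKk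
    rw [← enorm_mul, ← ofReal_norm, Real.norm_eq_abs, abs_mul]
    refine ((ENNReal.ofReal_le_ofReal h_le).trans ENNReal.ofReal_add_le).trans ?_
    gcongr
    exact ENNReal.le_tsum (f := fun k => layer (k + K) x) m
  calc _ ≤ ∫⁻ x in logTail f K,
          (ENNReal.ofReal (4 * C * 4 ^ b * (|f x| * Real.log (1 + |f x|) ^ b))
            + ∑' k, layer (k + K) x) ∂μ :=
        lintegral_mono_ae <| (ae_restrict_mem₀ (nullMeasurableSet_logTail hf K)).mono h_pointwise
    _ ≤ _ := by
        rw [lintegral_add_right' _ (AEMeasurable.tsum fun k => (hlayer_meas _).restrict)]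
        gcongr
        refine (setLIntegral_le_lintegral _ _).trans ?_
        rw [lintegral_tsum fun k => hlayer_meas _]
        exact ENNReal.tsum_le_tsum fun k => hτ.lintegral_layer_le hC (by omega)

lemma tendsto_measure_logTail (hf : Integrable f μ) :
    Tendsto (fun K => μ (logTail f K)) atTop (nhds 0) := by
  have h_markov (K : ℕ) (hK : 1 ≤ K) : μ (logTail f K) ≤ (∫⁻ x, ‖f x‖ₑ ∂μ) / K := by
    refine le_trans (measure_mono fun x hx => ?_) (meas_ge_le_lintegral_div
      hf.aestronglyMeasurable.enorm (Nat.cast_ne_zero.2 (by omega)) (ENNReal.natCast_ne_top K))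
    have hKx : (K : ℝ) ≤ |f x| := hx.trans (by
      linarith [Real.log_le_sub_one_of_pos (by positivity : 0 < 1 + |f x|)])
    rw [Set.mem_ofPred_eq, ← ofReal_norm, ← ENNReal.ofReal_natCast]
    exact ENNReal.ofReal_le_ofReal hKx
  have h_bound := ENNReal.Tendsto.const_div (a := ∫⁻ x, ‖f x‖ₑ ∂μ) ENNReal.tendsto_nat_nhds_top
    (Or.inr hf.hasFiniteIntegral.ne)
  rw [ENNReal.div_top] at h_bound
  exact tendsto_of_tendsto_of_tendsto_of_le_of_le' tendsto_const_nhds h_bound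
    (Eventually.of_forall fun _ => zero_le) ((eventually_ge_atTop 1).mono h_markov)

lemma exists_forall_setLIntegral_logTail_le (hC : 0 < C) (hf : Integrable f μ)
    (hfl : Integrable (fun x => |f x| * Real.log (1 + |f x|) ^ b) μ) {ε : ENNReal} (hε : ε ≠ 0) :
    ∃ K, ∀ τ, MomentGrowth C b τ μ → ∫⁻ x in logTail f K, ‖f x‖ₑ * ‖τ x‖ₑ ∂μ ≤ ε := by
  have h_log := tendsto_setLIntegral_zero
    ((hfl.const_mul (4 * C * 4 ^ b)).lintegral_lt_top.ne) (tendsto_measure_logTail hf)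
  have h_layers := ENNReal.tendsto_sum_nat_add _
    (tsum_ofReal_layerThreshold_mul_pow_ne_top (C := C) (b := b))
  have h_sum := h_log.add h_layers
  rw [add_zero] at h_sum
  obtain ⟨K, h_le, hK⟩ := ((h_sum.eventually_le_const hε.bot_lt).and (eventually_ge_atTop 1)).exists
  exact ⟨K, fun τ hτ =>
    (hτ.setLIntegral_logTail_le hC hf.aestronglyMeasurable hK).trans h_le⟩

lemma exists_memLp_top_forall_lintegral_sub_mul_le (hC : 0 < C) (hf : Integrable f μ)
    (hfl : Integrable (fun x => |f x| * Real.log (1 + |f x|) ^ b) μ) {ε : ENNReal} (hε : ε ≠ 0) :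
    ∃ g, MemLp g ⊤ μ ∧ ∀ τ, MomentGrowth C b τ μ → ∫⁻ x, ‖f x - g x‖ₑ * ‖τ x‖ₑ ∂μ ≤ ε := by
  obtain ⟨K, hK⟩ := exists_forall_setLIntegral_logTail_le hC hf hfl hε
  have h_meas := nullMeasurableSet_logTail hf.aestronglyMeasurable K
  refine ⟨(logTail f K)ᶜ.indicator f, ?_, fun τ hτ => (Eq.le ?_).trans (hK τ hτ)⟩
  · refine memLp_top_of_bound (hf.aestronglyMeasurable.indicator₀ h_meas.compl) (Real.exp K)
      (Eventually.of_forall fun x => ?_)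
    by_cases hx : x ∈ logTail f K
    · rw [Set.indicator_of_notMem (Set.notMem_compl_iff.2 hx), norm_zero]
      positivity
    · rw [Set.indicator_of_mem hx, Real.norm_eq_abs]
      linarith [(Real.log_lt_iff_lt_exp (by positivity)).1 (not_le.1 hx)]
  · rw [← lintegral_indicator₀ h_meas]
    refine lintegral_congr fun x => ?_
    by_cases hx : x ∈ logTail f K <;> simp [hx]

lemma MomentGrowth.lintegral_mul_le (hC : 0 ≤ C) (hτ : MomentGrowth C b τ μ) {g : Ω → ℝ}
    (hg : AEStronglyMeasurable g μ) :
    ∫⁻ x, ‖g x‖ₑ * ‖τ x‖ₑ ∂μ ≤ eLpNorm g 2 μ * ENNReal.ofReal (C * 2 ^ b) := by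
  have h_two : eLpNorm τ 2 μ ≤ ENNReal.ofReal (C * 2 ^ b) := by
    have h_sq := hτ.lintegral_enorm_pow_le 2 le_rfl
    have h_norm := eLpNorm_nnreal_pow_eq_lintegral (f := τ) (μ := μ) (p := 2) two_ne_zero
    simp only [NNReal.coe_ofNat, ENNReal.coe_ofNat, ENNReal.rpow_ofNat] at h_norm
    rw [← h_norm, ENNReal.ofReal_pow (by positivity)] at h_sq
    exact (ENNReal.pow_le_pow_left_iff two_ne_zero).1 h_sq
  calc ∫⁻ x, ‖g x‖ₑ * ‖τ x‖ₑ ∂μ = eLpNorm (g • τ) 1 μ := by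
        simp only [eLpNorm_one_eq_lintegral_enorm, smul_eq_mul, Pi.mul_apply, enorm_mul]
    _ ≤ eLpNorm g 2 μ * eLpNorm τ 2 μ :=
        eLpNorm_smul_le_mul_eLpNorm hτ.aestronglyMeasurable hg
    _ ≤ _ := by gcongr

end Extrapolation

/-! ### Approximation by dyadic step functions -/

lemma exists_abs_sub_comp_cubeDigits_le {d : ℕ} {g : (Fin d → ℝ) → ℝ} (hg : UniformContinuous g)
    {δ : ℝ} (hδ : 0 < δ) :
    ∃ (A : ℕ) (Φ : (Fin d → Fin A → Bool) → ℝ),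
      ∀ x ∈ unitCube d, |g x - Φ (cubeDigits A x)| ≤ δ := by
  obtain ⟨r, hr, hgr⟩ := Metric.uniformContinuous_iff.1 hg δ hδ
  obtain ⟨A, hA⟩ := exists_pow_lt_of_lt_one hr (by norm_num : (1 / 2 : ℝ) < 1)
  have h_close {x y : Fin d → ℝ} (hx : x ∈ unitCube d) (hy : y ∈ unitCube d)
      (hxy : cubeDigits A y = cubeDigits A x) : |g x - g y| ≤ δ := by
    refine (hgr (((dist_pi_le_iff (by positivity)).2 fun j => ?_).trans_lt hA)).le
    exact dyadicInterval.abs_sub_le (c := cubeDigits A x j) ⟨hx j trivial, rfl⟩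
      ⟨hy j trivial, congrFun hxy j⟩
  refine ⟨A, fun c => g (Function.invFunOn (cubeDigits A) (unitCube d) c), fun x hx => ?_⟩
  have h_cell : ∃ y ∈ unitCube d, cubeDigits A y = cubeDigits A x := ⟨x, hx, rfl⟩
  exact h_close hx (Function.invFunOn_mem h_cell) (Function.invFunOn_eq h_cell)

lemma exists_eLpNorm_sub_comp_cubeDigits_le {d : ℕ} {f : (Fin d → ℝ) → ℝ} {p : ENNReal}
    (hp : 1 ≤ p) (hp' : p ≠ ⊤) (hf : MemLp f p (cubeMeasure d)) {ε : ENNReal} (hε : ε ≠ 0) :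
    ∃ (A : ℕ) (Φ : (Fin d → Fin A → Bool) → ℝ),
      eLpNorm (fun x => f x - Φ (cubeDigits A x)) p (cubeMeasure d) ≤ ε := by
  have hε' : ε / 2 ≠ 0 := (ENNReal.half_pos hε).ne'
  obtain ⟨g, hg_supp, hfg, hg_cont, -⟩ := hf.exists_hasCompactSupport_eLpNorm_sub_le hp' hε'
  obtain ⟨δ, hδ, hδε⟩ := ENNReal.lt_iff_exists_nnreal_btwn.1 hε'.bot_lt
  obtain ⟨A, Φ, hΦ⟩ := exists_abs_sub_comp_cubeDigits_le
    (hg_supp.uniformContinuous_of_continuous hg_cont)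
    (NNReal.coe_pos.2 (ENNReal.coe_pos.1 hδ))
  have hΦ_meas : AEStronglyMeasurable (fun x => Φ (cubeDigits A x)) (cubeMeasure d) :=
    (memLp_top_comp_cubeDigits Φ).aestronglyMeasurable
  have hg_meas : AEStronglyMeasurable g (cubeMeasure d) := hg_cont.aestronglyMeasurable
  have h_step : eLpNorm (fun x => g x - Φ (cubeDigits A x)) p (cubeMeasure d) ≤ ε / 2 := by
    have h_ae : ∀ᵐ x ∂cubeMeasure d, ‖g x - Φ (cubeDigits A x)‖ ≤ δ :=
      (ae_restrict_mem (MeasurableSet.univ_pi fun _ => measurableSet_Ico)).mono hΦ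
    refine (eLpNorm_le_of_ae_bound h_ae).trans ?_
    rw [measure_univ, ENNReal.one_rpow, one_mul, ENNReal.ofReal_coe_nnreal]
    exact hδε.le
  refine ⟨A, Φ, ?_⟩
  calc _ = eLpNorm ((f - g) + fun x => g x - Φ (cubeDigits A x)) p (cubeMeasure d) := by
        congr 1
        ext x
        simp
    _ ≤ ε / 2 + ε / 2 := (eLpNorm_add_le (hf.1.sub hg_meas) (hg_meas.sub hΦ_meas) hp).trans
        (add_le_add hfg h_step)
    _ = ε := ENNReal.add_halves ε

lemma exists_step_forall_lintegral_sub_mul_le {d b : ℕ} {C : ℝ} (hC : 0 < C)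
    {f : (Fin d → ℝ) → ℝ} (hf : Integrable f (cubeMeasure d))
    (hfl : Integrable (fun x => |f x| * Real.log (1 + |f x|) ^ b) (cubeMeasure d))
    {ε : ENNReal} (hε : ε ≠ 0) :
    ∃ (A : ℕ) (Φ : (Fin d → Fin A → Bool) → ℝ), ∀ τ, MomentGrowth C b τ (cubeMeasure d) →
      ∫⁻ x, ‖f x - Φ (cubeDigits A x)‖ₑ * ‖τ x‖ₑ ∂cubeMeasure d ≤ ε := by
  obtain ⟨g, hg, hfg⟩ := exists_memLp_top_forall_lintegral_sub_mul_le hC hf hfl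
    (ENNReal.half_pos hε).ne'
  have hC2 : ENNReal.ofReal (C * 2 ^ b) ≠ 0 := (ENNReal.ofReal_pos.2 (by positivity)).ne'
  obtain ⟨A, Φ, hΦ⟩ := exists_eLpNorm_sub_comp_cubeDigits_le
    (ε := ε / 2 / ENNReal.ofReal (C * 2 ^ b))
    one_le_two ENNReal.ofNat_ne_top (hg.mono_exponent le_top)
    (ENNReal.div_pos (ENNReal.half_pos hε).ne' ENNReal.ofReal_ne_top).ne'
  refine ⟨A, Φ, fun τ hτ => ?_⟩
  have h_meas : AEStronglyMeasurable (fun x => g x - Φ (cubeDigits A x)) (cubeMeasure d) :=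
    hg.1.sub (memLp_top_comp_cubeDigits Φ).aestronglyMeasurable
  calc ∫⁻ x, ‖f x - Φ (cubeDigits A x)‖ₑ * ‖τ x‖ₑ ∂cubeMeasure d
      ≤ ∫⁻ x, (‖f x - g x‖ₑ * ‖τ x‖ₑ + ‖g x - Φ (cubeDigits A x)‖ₑ * ‖τ x‖ₑ)
          ∂cubeMeasure d := by
        gcongr with x
        rw [← add_mul, ← sub_add_sub_cancel (f x) (g x)]
        gcongr
        exact enorm_add_le _ _
    _ = ∫⁻ x, ‖f x - g x‖ₑ * ‖τ x‖ₑ ∂cubeMeasure d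
        + ∫⁻ x, ‖g x - Φ (cubeDigits A x)‖ₑ * ‖τ x‖ₑ ∂cubeMeasure d :=
        lintegral_add_right' _ (h_meas.enorm.mul hτ.aestronglyMeasurable.enorm)
    _ ≤ ε / 2 + ε / 2 := by
        gcongr
        · exact hfg τ hτ
        · refine (hτ.lintegral_mul_le hC.le h_meas).trans ?_
          rw [← ENNReal.le_div_iff_mul_le (Or.inl hC2) (Or.inl ENNReal.ofReal_ne_top)]
          exact hΦ
    _ = ε := ENNReal.add_halves ε

/-! ### The means are dominated by functions of controlled moment growth -/

lemma lintegral_enorm_pow_comp_cubeDigits {A d : ℕ} (Φ : (Fin d → Fin A → Bool) → ℝ) (p : ℕ) :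
    ∫⁻ x, ‖Φ (cubeDigits A x)‖ₑ ^ p ∂cubeMeasure d = ENNReal.ofReal (𝔼 c, |Φ c| ^ p) := by
  have h_int : Integrable (fun x => |Φ (cubeDigits A x)| ^ p) (cubeMeasure d) :=
    (memLp_top_comp_cubeDigits fun c => |Φ c| ^ p).integrable le_top
  rw [← integral_comp_cubeDigits fun c => |Φ c| ^ p,
    ofReal_integral_eq_lintegral_ofReal h_int (Eventually.of_forall fun _ => by positivity)]
  simp only [← ofReal_norm, Real.norm_eq_abs, ENNReal.ofReal_pow (abs_nonneg _)]

lemma momentGrowth_mixedLogMean_comp_cubeDigits {A d : ℕ} (B : Finset (Fin d)) {n : Fin d → ℕ}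
    (hn : ∀ j, 2 ≤ n j) (hA : ∀ j, n j ≤ 2 ^ A) {σ : (Fin d → Fin A → Bool) → ℝ}
    (hσ : ∀ c, |σ c| ≤ 1) :
    MomentGrowth (2 ^ d * 20 ^ B.card) B.card
      (mixedLogMean B (fun x => σ (cubeDigits A x)) n) (cubeMeasure d) := by
  rw [funext (mixedLogMean_comp_cubeDigits B hA σ)]
  refine ⟨(memLp_top_comp_cubeDigits _).aestronglyMeasurable, fun p hp => ?_⟩
  obtain ⟨q, rfl⟩ := Nat.exists_eq_add_of_le' hp
  rw [lintegral_enorm_pow_comp_cubeDigits]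
  refine ENNReal.ofReal_le_ofReal ((LpBoundedBy.convOp_mixedKernel q B hn hA σ).trans ?_)
  push_cast
  refine mul_le_of_le_one_right (by positivity) ?_
  exact Finset.expect_le Finset.univ_nonempty fun c _ => pow_le_one₀ (abs_nonneg _) (hσ c)

lemma exists_mixedLogMean_eq_comp_cubeDigits {A d : ℕ} (B : Finset (Fin d)) {n : Fin d → ℕ}
    (hA : ∀ j, n j ≤ 2 ^ A) (f : (Fin d → ℝ) → ℝ) :
    ∃ Ψ : (Fin d → Fin A → Bool) → ℝ, ∀ x, mixedLogMean B f n x = Ψ (cubeDigits A x) := by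
  refine ⟨fun c => ∑ k ∈ indexBox n, mixedMultiplier B n k * (walshCoef f k * dyadicWalshPi k c),
    fun x => ?_⟩
  rw [mixedLogMean_eq_sum_multiplier]
  refine Finset.sum_congr rfl fun k hk => ?_
  rw [prod_walsh_eq_dyadicWalshPi fun j => (mem_indexBox.1 hk j).trans_le (hA j)]

lemma integrable_mixedLogMean {d : ℕ} (B : Finset (Fin d)) (f : (Fin d → ℝ) → ℝ)
    (n : Fin d → ℕ) : Integrable (mixedLogMean B f n) (cubeMeasure d) := by
  obtain ⟨Ψ, hΨ⟩ := exists_mixedLogMean_eq_comp_cubeDigits B (fun j => (lt_two_pow_sum n j).le) f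
  rw [funext hΨ]
  exact (memLp_top_comp_cubeDigits Ψ).integrable le_top

/-- By duality, `τ` can be taken to be the mean of the sign of the mean of `f`. -/
lemma exists_momentGrowth_lintegral_mixedLogMean_le {d : ℕ} (B : Finset (Fin d)) {n : Fin d → ℕ}
    (hn : ∀ j, 2 ≤ n j) {f : (Fin d → ℝ) → ℝ} (hf : Integrable f (cubeMeasure d)) :
    ∃ τ, MomentGrowth (2 ^ d * 20 ^ B.card) B.card τ (cubeMeasure d) ∧
      ∫⁻ x, ‖mixedLogMean B f n x‖ₑ ∂cubeMeasure d ≤ ∫⁻ x, ‖f x‖ₑ * ‖τ x‖ₑ ∂cubeMeasure d := by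
  set A := ∑ j, n j
  have hA (j : Fin d) : n j ≤ 2 ^ A := (lt_two_pow_sum n j).le
  obtain ⟨Ψ, hΨ⟩ := exists_mixedLogMean_eq_comp_cubeDigits B hA f
  set σ : (Fin d → Fin A → Bool) → ℝ := fun c => SignType.sign (Ψ c)
  have hσ_le (c : Fin d → Fin A → Bool) : |σ c| ≤ 1 := by
    cases h : SignType.sign (Ψ c) <;> simp [σ, h]
  have hσ_int : Integrable (fun x => σ (cubeDigits A x)) (cubeMeasure d) :=
    (memLp_top_comp_cubeDigits σ).integrable le_top
  refine ⟨_, momentGrowth_mixedLogMean_comp_cubeDigits B hn hA hσ_le, ?_⟩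
  have h_abs (x : Fin d → ℝ) :
      ‖mixedLogMean B f n x‖ = mixedLogMean B f n x * σ (cubeDigits A x) := by
    rw [hΨ, self_mul_sign, Real.norm_eq_abs]
  calc ∫⁻ x, ‖mixedLogMean B f n x‖ₑ ∂cubeMeasure d
      = ENNReal.ofReal (∫ x, f x * mixedLogMean B (fun x => σ (cubeDigits A x)) n x
          ∂cubeMeasure d) := by
        rw [← ofReal_integral_norm_eq_lintegral_enorm (integrable_mixedLogMean B f n),
          ← integral_mixedLogMean_mul_comm B n hf hσ_int]
        simp only [h_abs]
    _ ≤ ‖∫ x, f x * mixedLogMean B (fun x => σ (cubeDigits A x)) n x ∂cubeMeasure d‖ₑ :=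
        Real.ofReal_le_enorm _
    _ ≤ _ := by
        simp only [← enorm_mul]
        exact enorm_integral_le_lintegral_enorm _

lemma momentGrowth_one {Ω : Type*} [MeasurableSpace Ω] (μ : Measure Ω) [IsProbabilityMeasure μ]
    {C : ℝ} (hC : 1 ≤ C) (b : ℕ) : MomentGrowth C b (fun _ => 1) μ := by
  refine ⟨aestronglyMeasurable_const, fun p hp => ?_⟩
  have hp' : (1 : ℝ) ≤ p := by exact_mod_cast one_le_two.trans hp
  simpa using one_le_pow₀ (one_le_mul_of_one_le_of_one_le hC (one_le_pow₀ hp')) (n := p)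

/-! ### Convergence on Walsh polynomials -/

/-- The Walsh polynomial on the cube with spectrum `s` and coefficients `a`. -/
def walshPolynomial {d : ℕ} (s : Finset (Fin d → ℕ)) (a : (Fin d → ℕ) → ℝ) (x : Fin d → ℝ) : ℝ :=
  ∑ k ∈ s, a k * ∏ i, walsh (k i) (x i)

lemma sum_dyadicWalshPi_mul {A d : ℕ} (c t : Fin d → Fin A → Bool) :
    ∑ k ∈ indexBox (fun _ : Fin d => 2 ^ A), dyadicWalshPi k c * dyadicWalshPi k t
      = if t = c then (2 ^ A) ^ d else 0 := by
  have h_prod : ∑ k ∈ indexBox (fun _ : Fin d => 2 ^ A), dyadicWalshPi k c * dyadicWalshPi k t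
      = ∏ i, dyadicDirichlet (2 ^ A) (c i - t i) := by
    simp only [dyadicDirichlet, dyadicWalsh.sub_eq_mul, Finset.prod_univ_sum, dyadicWalshPi,
      Finset.prod_mul_distrib, indexBox]
  rw [h_prod]
  simp only [dyadicDirichlet.two_pow_eq, sub_eq_zero, Finset.prod_ite_zero, Finset.mem_univ,
    forall_const, ← funext_iff, eq_comm (a := c), Finset.prod_const, Finset.card_univ,
    Fintype.card_fin]

lemma comp_cubeDigits_eq_walshPolynomial {A d : ℕ} (Φ : (Fin d → Fin A → Bool) → ℝ) :
    (fun x => Φ (cubeDigits A x))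
      = walshPolynomial (indexBox fun _ => 2 ^ A) fun k => 𝔼 t, Φ t * dyadicWalshPi k t := by
  funext x
  have h_walsh (k) (hk : k ∈ indexBox fun _ : Fin d => 2 ^ A) :
      (𝔼 t, Φ t * dyadicWalshPi k t) * ∏ i, walsh (k i) (x i)
        = 𝔼 t, Φ t * (dyadicWalshPi k (cubeDigits A x) * dyadicWalshPi k t) := by
    rw [prod_walsh_eq_dyadicWalshPi (mem_indexBox.1 hk), Finset.expect_mul]
    exact Finset.expect_congr rfl fun t _ => by ring
  rw [walshPolynomial, Finset.sum_congr rfl h_walsh, ← Finset.expect_sum_comm]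
  simp only [← Finset.mul_sum, sum_dyadicWalshPi_mul, Fintype.expect_eq_sum_div_card]
  simp

lemma walshCoef_prod_walsh {d : ℕ} (k l : Fin d → ℕ) :
    walshCoef (fun x => ∏ i, walsh (k i) (x i)) l = if l = k then 1 else 0 := by
  set A := ∑ i, (k i + l i)
  have hk (i : Fin d) : k i < 2 ^ A :=
    (Nat.le_add_right _ _).trans_lt (lt_two_pow_sum (fun i => k i + l i) i)
  have hl (i : Fin d) : l i < 2 ^ A :=
    (Nat.le_add_left _ _).trans_lt (lt_two_pow_sum (fun i => k i + l i) i)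
  have h_expect : 𝔼 c : Fin d → Fin A → Bool, dyadicWalshPi k c * dyadicWalshPi l c
      = ∏ i, 𝔼 x : Fin A → Bool, dyadicWalsh (k i ^^^ l i) x := by
    simp only [dyadicWalshPi, ← Finset.prod_mul_distrib, ← dyadicWalsh.xor_eq_mul,
      Fintype.expect_eq_sum_div_card, Finset.prod_div_distrib, Finset.prod_univ_sum,
      Fintype.piFinset_univ]
    simp
  simp only [prod_walsh_eq_dyadicWalshPi hk]
  rw [walshCoef_comp_cubeDigits hl, h_expect,
    Finset.prod_congr rfl fun i _ => expect_dyadicWalsh (Nat.xor_lt_two_pow (hk i) (hl i))]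
  simp only [Nat.xor_eq_zero_iff, Finset.prod_ite_zero, Finset.mem_univ, forall_const,
    ← funext_iff, eq_comm (a := k), Finset.prod_const_one]

lemma walshCoef_walshPolynomial {d : ℕ} (s : Finset (Fin d → ℕ)) (a : (Fin d → ℕ) → ℝ)
    (l : Fin d → ℕ) : walshCoef (walshPolynomial s a) l = if l ∈ s then a l else 0 := by
  have h_int (k : Fin d → ℕ) : Integrable
      (fun x => (a k * ∏ i, walsh (k i) (x i)) * ∏ i, walsh (l i) (x i)) (cubeMeasure d) :=
    integrable_mul_prod_walsh (integrable_mul_prod_walsh (integrable_const _) k) l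
  have h_coef (k : Fin d → ℕ) :
      ∫ x, (a k * ∏ i, walsh (k i) (x i)) * ∏ i, walsh (l i) (x i) ∂cubeMeasure d
        = if l = k then a k else 0 := by
    simp only [mul_assoc, integral_const_mul]
    exact (congrArg (a k * ·) (walshCoef_prod_walsh k l)).trans (mul_boole _ _)
  simp only [walshCoef, walshPolynomial, Finset.sum_mul]
  rw [integral_finsetSum _ fun k _ => h_int k]
  simp only [h_coef, Finset.sum_ite_eq]

lemma mixedLogMean_walshPolynomial {d : ℕ} (B : Finset (Fin d)) {n : Fin d → ℕ}
    {s : Finset (Fin d → ℕ)} (hs : s ⊆ indexBox n) (a : (Fin d → ℕ) → ℝ) (x : Fin d → ℝ) :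
    mixedLogMean B (walshPolynomial s a) n x
      = walshPolynomial s (fun k => mixedMultiplier B n k * a k) x := by
  rw [mixedLogMean_eq_sum_multiplier, walshPolynomial, ← Finset.sum_subset hs]
  · refine Finset.sum_congr rfl fun k hk => ?_
    rw [walshCoef_walshPolynomial, if_pos hk, mul_assoc]
  · intro k _ hk
    rw [walshCoef_walshPolynomial, if_neg hk, zero_mul, mul_zero]

lemma tendsto_logSum_atTop : Tendsto logSum atTop atTop := by
  rw [← tendsto_add_atTop_iff_nat 1]
  exact Real.tendsto_sum_range_one_div_nat_succ_atTop.congr fun n =>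
    (logSum_add_one_eq_sum_range n).symm

lemma card_filter_logMeanIndex_le (β : Prop) [Decidable β] (n k : ℕ) :
    ((Finset.Ico 1 n).filter fun i => logMeanIndex β n i ≤ k).card ≤ k := by
  by_cases hβ : β
  · have h_subset : ((Finset.Ico 1 n).filter fun i => n - i ≤ k) ⊆ Finset.Ico (n - k) n := by
      intro i
      simp only [Finset.mem_filter, Finset.mem_Ico]
      omega
    simp only [logMeanIndex, if_pos hβ]
    exact (Finset.card_le_card h_subset).trans (by rw [Nat.card_Ico]; omega)
  · have h_subset : ((Finset.Ico 1 n).filter fun i => i ≤ k) ⊆ Finset.Icc 1 k := by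
      intro i
      simp only [Finset.mem_filter, Finset.mem_Ico, Finset.mem_Icc]
      omega
    simp only [logMeanIndex, if_neg hβ]
    exact (Finset.card_le_card h_subset).trans_eq (by simp)

lemma abs_one_sub_logMultiplier_le (β : Prop) [Decidable β] {n : ℕ} (hn : 2 ≤ n) (k : ℕ) :
    |1 - logMultiplier β n k| ≤ k / logSum n := by
  have hl := logSum_pos hn
  set missing := (Finset.Ico 1 n).filter fun i => logMeanIndex β n i ≤ k
  have h_missing : 1 - logMultiplier β n k = ∑ i ∈ missing, logWeight n i := by
    rw [← sum_logWeight hn, logMultiplier, ← Finset.sum_filter, sub_eq_iff_eq_add,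
      ← Finset.sum_filter_add_sum_filter_not _ (fun i => logMeanIndex β n i ≤ k)]
    simp only [not_le, missing]
  have h_weight (i : ℕ) (hi : i ∈ missing) : logWeight n i ≤ 1 / logSum n := by
    have hi1 : (1 : ℝ) ≤ i := by exact_mod_cast (Finset.mem_Ico.1 (Finset.mem_filter.1 hi).1).1
    exact one_div_le_one_div_of_le hl (le_mul_of_one_le_left hl.le hi1)
  rw [h_missing, abs_of_nonneg (Finset.sum_nonneg fun i _ => logWeight_nonneg n i)]
  calc ∑ i ∈ missing, logWeight n i ≤ missing.card • (1 / logSum n) :=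
        Finset.sum_le_card_nsmul _ _ _ h_weight
    _ ≤ k / logSum n := by
        rw [nsmul_eq_mul, mul_one_div]
        gcongr
        exact card_filter_logMeanIndex_le β n k

lemma tendsto_logMultiplier (β : Prop) [Decidable β] (k : ℕ) :
    Tendsto (fun n => logMultiplier β n k) atTop (nhds 1) := by
  have h_bound : Tendsto (fun n => (k : ℝ) / logSum n) atTop (nhds 0) :=
    tendsto_const_nhds.div_atTop tendsto_logSum_atTop
  refine tendsto_iff_norm_sub_tendsto_zero.2
    (squeeze_zero' (Eventually.of_forall fun _ => norm_nonneg _) ?_ h_bound)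
  filter_upwards [eventually_ge_atTop 2] with n hn
  rw [norm_sub_rev]
  exact abs_one_sub_logMultiplier_le β hn k

lemma tendsto_mixedMultiplier {d : ℕ} (B : Finset (Fin d)) (k : Fin d → ℕ) :
    Tendsto (fun n => mixedMultiplier B n k) atTop (nhds 1) := by
  rw [← Finset.prod_const_one (s := (Finset.univ : Finset (Fin d)))]
  refine tendsto_finsetProd _ fun j _ => (tendsto_logMultiplier (j ∈ B) (k j)).comp ?_
  exact (Function.monotone_eval j).tendsto_atTop_atTop fun m => ⟨fun _ => m, le_rfl⟩

lemma enorm_prod_walsh {d : ℕ} (k : Fin d → ℕ) (x : Fin d → ℝ) :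
    ‖∏ i, walsh (k i) (x i)‖ₑ = 1 := by
  rw [prod_walsh_eq_dyadicWalshPi (lt_two_pow_sum k), ← ofReal_norm, Real.norm_eq_abs,
    dyadicWalshPi, Finset.abs_prod]
  simp only [dyadicWalsh.abs_eq_one, Finset.prod_const_one, ENNReal.ofReal_one]

lemma tendsto_lintegral_mixedLogMean_walshPolynomial_sub {d : ℕ} (B : Finset (Fin d))
    (s : Finset (Fin d → ℕ)) (a : (Fin d → ℕ) → ℝ) :
    Tendsto (fun n => ∫⁻ x, ‖mixedLogMean B (walshPolynomial s a) n x - walshPolynomial s a x‖ₑ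
      ∂cubeMeasure d) atTop (nhds 0) := by
  have h_limit : Tendsto (fun n => ∑ k ∈ s, ‖(mixedMultiplier B n k - 1) * a k‖ₑ) atTop
      (nhds 0) := by
    rw [← Finset.sum_const_zero (s := s)]
    refine tendsto_finsetSum _ fun k _ => ?_
    simpa using (((tendsto_mixedMultiplier B k).sub_const 1).mul_const (a k)).enorm
  have h_spectrum : ∀ᶠ n in atTop, s ⊆ indexBox n :=
    (Finset.eventually_all s).2 fun k _ =>
      (eventually_ge_atTop fun j => k j + 1).mono fun n hn => mem_indexBox.2 hn
  refine tendsto_of_tendsto_of_tendsto_of_le_of_le' tendsto_const_nhds h_limit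
    (Eventually.of_forall fun _ => zero_le) (h_spectrum.mono fun n hn => ?_)
  have h_sub (x : Fin d → ℝ) :
      mixedLogMean B (walshPolynomial s a) n x - walshPolynomial s a x
        = walshPolynomial s (fun k => (mixedMultiplier B n k - 1) * a k) x := by
    rw [mixedLogMean_walshPolynomial B hn]
    simp only [walshPolynomial, ← Finset.sum_sub_distrib, sub_mul, one_mul]
  calc _ ≤ ∫⁻ _, ∑ k ∈ s, ‖(mixedMultiplier B n k - 1) * a k‖ₑ ∂cubeMeasure d := by
        gcongr with x
        rw [h_sub]
        refine (enorm_sum_le _ _).trans_eq (Finset.sum_congr rfl fun k _ => ?_)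
        rw [enorm_mul _ (∏ i, walsh (k i) (x i)), enorm_prod_walsh, mul_one]
    _ = _ := by rw [lintegral_const, measure_univ, mul_one]

/-! ### Convergence on `L log^b L` -/

lemma mixedLogMean_sub {d : ℕ} (B : Finset (Fin d)) {f g : (Fin d → ℝ) → ℝ}
    (hf : Integrable f (cubeMeasure d)) (hg : Integrable g (cubeMeasure d)) (n : Fin d → ℕ)
    (x : Fin d → ℝ) :
    mixedLogMean B (fun x => f x - g x) n x = mixedLogMean B f n x - mixedLogMean B g n x := by
  have h_coef (k : Fin d → ℕ) :
      walshCoef (fun x => f x - g x) k = walshCoef f k - walshCoef g k := by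
    simp only [walshCoef, sub_mul]
    exact integral_sub (integrable_mul_prod_walsh hf k) (integrable_mul_prod_walsh hg k)
  simp only [mixedLogMean_eq_sum_multiplier, h_coef, sub_mul, mul_sub, Finset.sum_sub_distrib]

lemma lintegral_mixedLogMean_sub_le {d : ℕ} (B : Finset (Fin d)) {f g : (Fin d → ℝ) → ℝ}
    (hf : Integrable f (cubeMeasure d)) (hg : Integrable g (cubeMeasure d)) (n : Fin d → ℕ) :
    ∫⁻ x, ‖mixedLogMean B f n x - f x‖ₑ ∂cubeMeasure d
      ≤ ∫⁻ x, ‖mixedLogMean B (fun x => f x - g x) n x‖ₑ ∂cubeMeasure d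
        + ∫⁻ x, ‖mixedLogMean B g n x - g x‖ₑ ∂cubeMeasure d
        + ∫⁻ x, ‖f x - g x‖ₑ ∂cubeMeasure d := by
  have h_mean := (integrable_mixedLogMean B (fun x => f x - g x) n).1.enorm
  have h_diff := ((integrable_mixedLogMean B g n).sub hg).1.enorm
  simp only [Pi.sub_apply] at h_diff
  rw [← lintegral_add_left' h_mean, ← lintegral_add_left' (h_mean.fun_add h_diff)]
  gcongr with x
  calc ‖mixedLogMean B f n x - f x‖ₑ
      = ‖mixedLogMean B (fun x => f x - g x) n x + (mixedLogMean B g n x - g x)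
          - (f x - g x)‖ₑ := by
        rw [mixedLogMean_sub B hf hg]
        congr 1
        ring
    _ ≤ _ := (enorm_sub_le).trans (by gcongr; exact enorm_add_le _ _)

theorem tendsto_lintegral_mixedLogMean_sub {d : ℕ} (B : Finset (Fin d))
    {f : (Fin d → ℝ) → ℝ} (hf : Integrable f (cubeMeasure d))
    (hfl : Integrable (fun x => |f x| * Real.log (1 + |f x|) ^ B.card) (cubeMeasure d)) :
    Tendsto (fun n => ∫⁻ x, ‖mixedLogMean B f n x - f x‖ₑ ∂cubeMeasure d) atTop (nhds 0) := by
  refine ENNReal.tendsto_nhds_zero.2 fun ε hε => ?_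
  have hε3 : ε / 3 ≠ 0 := (ENNReal.div_pos hε.ne' ENNReal.ofNat_ne_top).ne'
  have hC : (1 : ℝ) ≤ 2 ^ d * 20 ^ B.card :=
    one_le_mul_of_one_le_of_one_le (one_le_pow₀ one_le_two) (one_le_pow₀ (by norm_num))
  obtain ⟨A, Φ, hΦ⟩ :=
    exists_step_forall_lintegral_sub_mul_le (zero_lt_one.trans_le hC) hf hfl hε3
  set g : (Fin d → ℝ) → ℝ := fun x => Φ (cubeDigits A x) with hg_def
  have hg : Integrable g (cubeMeasure d) := (memLp_top_comp_cubeDigits Φ).integrable le_top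
  have h_step : ∀ᶠ n in atTop,
      ∫⁻ x, ‖mixedLogMean B g n x - g x‖ₑ ∂cubeMeasure d ≤ ε / 3 := by
    rw [hg_def, comp_cubeDigits_eq_walshPolynomial]
    exact ENNReal.tendsto_nhds_zero.1
      (tendsto_lintegral_mixedLogMean_walshPolynomial_sub B _ _) _ hε3.bot_lt
  have h_approx : ∫⁻ x, ‖f x - g x‖ₑ ∂cubeMeasure d ≤ ε / 3 := by
    simpa using hΦ _ (momentGrowth_one _ hC _)
  filter_upwards [h_step, eventually_ge_atTop fun _ => 2] with n hn_step hn
  obtain ⟨τ, hτ, h_dom⟩ := exists_momentGrowth_lintegral_mixedLogMean_le B hn (hf.sub hg)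
  calc _ ≤ _ := lintegral_mixedLogMean_sub_le B hf hg n
    _ ≤ ε / 3 + ε / 3 + ε / 3 := by
        gcongr
        exact h_dom.trans (hΦ τ hτ)
    _ = ε := ENNReal.add_thirds ε

theorem stmt1_general {d : ℕ} (B : Finset (Fin d)) {f : (Fin d → ℝ) → ℝ}
    (hf : Integrable f (cubeMeasure d))
    (hfl : Integrable (fun x => |f x| * Real.log (1 + |f x|) ^ B.card) (cubeMeasure d)) :
    Tendsto (fun n => ∫ x, |mixedLogMean B f n x - f x| ∂cubeMeasure d) atTop (nhds 0) := by
  refine ((ENNReal.tendsto_toReal ENNReal.zero_ne_top).comp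
    (tendsto_lintegral_mixedLogMean_sub B hf hfl)).congr fun n => ?_
  exact (integral_norm_eq_lintegral_enorm ((integrable_mixedLogMean B f n).sub hf).1).symm

/-- Theorem (normconv). For `f ∈ L log^{|B|} L(I^d)`, the mixed logarithmic
means converge to `f` in `L^1(I^d)`-norm as `min_j n_j → ∞`. -/
theorem stmt1 (d : ℕ) (hd : 1 ≤ d) (B : Finset (Fin d)) (hB : B.Nonempty)
    (f : (Fin d → ℝ) → ℝ) (hf : Measurable f) (hfi : Integrable f (cubeMeasure d))
    (hfl : Integrable (fun x => |f x| * Real.log (1 + |f x|) ^ B.card) (cubeMeasure d)) :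
    ∀ ε > (0:ℝ), ∃ N : ℕ, ∀ n : Fin d → ℕ, (∀ j, 2 ≤ n j) → (∀ j, N ≤ n j) →
      ∫ x, |mixedLogMean B f n x - f x| ∂(cubeMeasure d) < ε := by
  intro ε hε
  obtain ⟨N, hN⟩ := eventually_atTop.1 ((stmt1_general B hfi hfl).eventually_lt_const hε)
  exact ⟨∑ j, N j, fun n _ hn => hN n fun j =>
    (Finset.single_le_sum (fun _ _ => Nat.zero_le _) (Finset.mem_univ j)).trans (hn j)⟩

end
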